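/- arXiv:2201.03880 — 3 statements merged into one kernel-verified Lean document; each statement's English description precedes it below -/
import Mathlib

section
/- Let k and w be natural numbers and let G be a graph that has a Hamiltonian path. If G admits a tree representation of width less than k that has a node of weight at most w, then |G| ≤ (k+1)^(w+1) − 1. -/
open SimpleGraph Real

/-- `G` has a (not necessarily induced) path on `n` vertices. -/
def HasPathOfOrder {V : Type*} (G : SimpleGraph V) (n : ℕ) : Prop :=
  ∃ (u v : V) (p : G.Walk u v), p.IsPath ∧ p.length + 1 = n

/-- `G` has a Hamiltonian path. -/
def HasHamPath {V : Type*} (G : SimpleGraph V) : Prop :=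
  ∃ (u v : V) (p : G.Walk u v), p.IsPath ∧ ∀ w, w ∈ p.support

/-- `G` has an induced path on at least `r` vertices (an induced subgraph isomorphic to a
path graph on `m ≥ r` vertices). -/
def HasInducedPathGE {V : Type*} (G : SimpleGraph V) (r : ℝ) : Prop :=
  ∃ m : ℕ, r ≤ (m : ℝ) ∧ Nonempty (pathGraph m ↪g G)

/-- A tree (or path) representation of `G` over the graph `T`: every vertex `v` of `G` has a
nonempty connected model `model v ⊆ V(T)`, and models of adjacent vertices intersect. -/
structure TreeRep {V N : Type*} (G : SimpleGraph V) (T : SimpleGraph N) where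
  model : V → Set N
  model_connected : ∀ v, (T.induce (model v)).Connected
  adj_meet : ∀ ⦃u v⦄, G.Adj u v → (model u ∩ model v).Nonempty

namespace TreeRep

variable {V N : Type*} {G : SimpleGraph V} {T : SimpleGraph N}

/-- The bag of the representation at a node `t`. -/
def bag (R : TreeRep G T) (t : N) : Set V := {v | t ∈ R.model v}

/-- The representation has width less than `k`, i.e. all bags have at most `k` vertices. -/
def WidthLT (R : TreeRep G T) (k : ℕ) : Prop := ∀ t, (R.bag t).ncard ≤ k

/-- The representation has width at most `k`, i.e. all bags have at most `k + 1` vertices. -/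
def WidthLE (R : TreeRep G T) (k : ℕ) : Prop := ∀ t, (R.bag t).ncard ≤ k + 1

/-- The weight of a path `p` of `T`: the number of vertices of `G` whose model meets `p`. -/
noncomputable def pathWeight (R : TreeRep G T) {x y : N} (p : T.Walk x y) : ℕ :=
  {v : V | ∃ t ∈ p.support, t ∈ R.model v}.ncard

/-- A representation is varied if no bag is contained in the bag at a neighboring node. -/
def Varied (R : TreeRep G T) : Prop := ∀ ⦃t t'⦄, T.Adj t t' → ¬ R.bag t ⊆ R.bag t'

/-- The representation has adhesion less than `a`: the adhesion set of every edge of `T`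
has fewer than `a` vertices. -/
def AdhesionLT (R : TreeRep G T) (a : ℕ) : Prop :=
  ∀ ⦃t t'⦄, T.Adj t t' → (R.bag t ∩ R.bag t').ncard < a

/-- The torso of the representation at a node `t`: the subgraph induced on the bag at `t`
together with all edges inside adhesion sets of edges of `T` incident to `t`. -/
def torso (R : TreeRep G T) (t : N) : SimpleGraph (R.bag t) :=
  SimpleGraph.fromRel (fun u v =>
    G.Adj u v ∨ ∃ t', T.Adj t t' ∧ (u : V) ∈ R.bag t' ∧ (v : V) ∈ R.bag t')

end TreeRep

/-- `G` has pathwidth less than `k`: it has a representation over a path all of whose bags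
have at most `k` vertices. -/
def PathwidthLT {V : Type*} (G : SimpleGraph V) (k : ℕ) : Prop :=
  ∃ (m : ℕ) (R : TreeRep G (pathGraph (m + 1))), R.WidthLT k

/-- `G` has treewidth less than `k`: it has a representation over a tree all of whose bags
have at most `k` vertices. -/
def TreewidthLT {V : Type*} (G : SimpleGraph V) (k : ℕ) : Prop :=
  ∃ (N : Type) (_ : Fintype N) (T : SimpleGraph N), T.IsTree ∧
    ∃ R : TreeRep G T, R.WidthLT k

/-- `G` has treewidth at most `k`. -/
def TreewidthLE {V : Type*} (G : SimpleGraph V) (k : ℕ) : Prop :=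
  ∃ (N : Type) (_ : Fintype N) (T : SimpleGraph N), T.IsTree ∧
    ∃ R : TreeRep G T, R.WidthLE k

/-- A leaf of a graph: a vertex with at most one neighbor. -/
def IsLeafNode {N : Type*} (T : SimpleGraph N) (l : N) : Prop :=
  (T.neighborSet l).Subsingleton

/-- `H` is obtained from `G` by a sequence of edge contractions: there is a surjection
from `V(G)` onto `V(H)` with connected fibers inducing the adjacency of `H`. -/
def IsContraction {W V : Type*} (H : SimpleGraph W) (G : SimpleGraph V) : Prop :=
  ∃ f : V → W, Function.Surjective f ∧
    (∀ w : W, (G.induce (f ⁻¹' {w})).Connected) ∧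
    (∀ x y : W, H.Adj x y ↔ x ≠ y ∧ ∃ u v : V, f u = x ∧ f v = y ∧ G.Adj u v)

/-- `G` is an interval graph: the intersection graph of a family of real intervals. -/
def IsIntervalGraph {V : Type*} (G : SimpleGraph V) : Prop :=
  ∃ l r : V → ℝ, (∀ v, l v ≤ r v) ∧
    ∀ u v : V, G.Adj u v ↔ u ≠ v ∧ max (l u) (l v) ≤ min (r u) (r v)

/-- The internal vertices of a walk: vertices of the walk distinct from its two endpoints. -/
def WalkInternal {V : Type*} {G : SimpleGraph V} {x y : V} (p : G.Walk x y) : Set V :=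
  {w | w ∈ p.support ∧ w ≠ x ∧ w ≠ y}

/-- `H` is a topological minor of `G`: there are branch vertices `φ u` for `u ∈ V(H)` and
internally disjoint paths of `G` joining them, one for each edge of `H`. -/
def IsTopMinor {W V : Type*} (H : SimpleGraph W) (G : SimpleGraph V) : Prop :=
  ∃ (φ : W ↪ V) (P : ∀ ⦃u v : W⦄, H.Adj u v → G.Walk (φ u) (φ v)),
    (∀ ⦃u v⦄ (h : H.Adj u v), (P h).IsPath) ∧
    (∀ ⦃u v⦄ (h : H.Adj u v), P h.symm = (P h).reverse) ∧
    (∀ ⦃u v⦄ (h : H.Adj u v), ∀ w ∈ WalkInternal (P h), w ∉ Set.range φ) ∧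
    (∀ ⦃u v u' v'⦄ (h : H.Adj u v) (h' : H.Adj u' v'), s(u, v) ≠ s(u', v') →
      ∀ w ∈ WalkInternal (P h), w ∉ WalkInternal (P h'))

/-- `H` is (an isomorphic copy of) a subgraph of `G`. -/
def ContainsSubgraphCopy {A B : Type*} (H : SimpleGraph A) (G : SimpleGraph B) : Prop :=
  ∃ f : A ↪ B, ∀ u v : A, H.Adj u v → G.Adj (f u) (f v)

/-- `G` is `k`-degenerate: every (induced) subgraph has a vertex of degree at most `k`. -/
def Degenerate {V : Type*} (G : SimpleGraph V) (k : ℕ) : Prop :=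
  ∀ s : Set V, s.Nonempty → ∃ v ∈ s, {w | w ∈ s ∧ G.Adj v w}.ncard ≤ k

/-- The cycle on `ZMod m` (for `m ≥ 3` this is the cycle graph on `m` vertices). -/
def ringGraph (m : ℕ) : SimpleGraph (ZMod m) :=
  SimpleGraph.fromRel (fun i j => j = i + 1)

/-- Cliquewidth expressions with labels in `Fin k`. -/
inductive CWExpr (k : ℕ) where
  | vertex (l : Fin k) : CWExpr k
  | union (e₁ e₂ : CWExpr k) : CWExpr k
  | addEdges (i j : Fin k) (hij : i ≠ j) (e : CWExpr k) : CWExpr k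
  | relabel (f : Fin k → Fin k) (e : CWExpr k) : CWExpr k

namespace CWExpr

variable {k : ℕ}

/-- The vertex set of the graph described by a cliquewidth expression. -/
def verts : CWExpr k → Type
  | vertex _ => Unit
  | union e₁ e₂ => e₁.verts ⊕ e₂.verts
  | addEdges _ _ _ e => e.verts
  | relabel _ e => e.verts

/-- The labelling of the vertices described by a cliquewidth expression. -/
def label : (e : CWExpr k) → e.verts → Fin k
  | vertex l, _ => l
  | union e₁ _, Sum.inl x => e₁.label x
  | union _ e₂, Sum.inr x => e₂.label x
  | addEdges _ _ _ e, x => e.label x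
  | relabel f e, x => f (e.label x)

/-- The adjacency relation described by a cliquewidth expression. -/
def adj : (e : CWExpr k) → e.verts → e.verts → Prop
  | vertex _, _, _ => False
  | union e₁ _, Sum.inl x, Sum.inl y => e₁.adj x y
  | union _ e₂, Sum.inr x, Sum.inr y => e₂.adj x y
  | union _ _, _, _ => False
  | addEdges i j _ e, x, y =>
      e.adj x y ∨ (e.label x = i ∧ e.label y = j) ∨ (e.label x = j ∧ e.label y = i)
  | relabel _ e, x, y => e.adj x y

/-- The graph described by a cliquewidth expression. -/
def graph (e : CWExpr k) : SimpleGraph e.verts := SimpleGraph.fromRel e.adj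

end CWExpr

/-- `G` has cliquewidth at most `k`: it is isomorphic to the graph of a cliquewidth
expression with at most `k` labels. -/
def CliquewidthLE {V : Type*} (G : SimpleGraph V) (k : ℕ) : Prop :=
  ∃ e : CWExpr k, Nonempty (G ≃g e.graph)

/-- `G` has `(k, Δ)`-almost bounded degree: removing at most `k` vertices yields a graph of
maximum degree at most `Δ`. -/
def AlmostBoundedDegree {V : Type*} (G : SimpleGraph V) (k Δ : ℕ) : Prop :=
  ∃ X : Set V, X.ncard ≤ k ∧ ∀ v ∉ X, {w | w ∉ X ∧ G.Adj v w}.ncard ≤ Δ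

/-- An embedding scheme for `H`: a rotation system (a permutation of the darts that is,
around each vertex, a single cycle on the darts leaving that vertex) together with a
signature on the edges. -/
structure EmbScheme {W : Type*} (H : SimpleGraph W) where
  rot : Equiv.Perm H.Dart
  rot_fst : ∀ d : H.Dart, (rot d).fst = d.fst
  rot_cyclic : ∀ d d' : H.Dart, d.fst = d'.fst → ∃ n : ℕ, (rot ^ n) d = d'
  sign : Sym2 W → Bool

namespace EmbScheme

variable {W : Type*} {H : SimpleGraph W}

/-- The face-tracing step of an embedding scheme, acting on darts with a direction. -/
def faceStep (S : EmbScheme H) : H.Dart × Bool → H.Dart × Bool :=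
  fun p =>
    let s' := xor p.2 (S.sign p.1.edge)
    ((if s' then S.rot.symm p.1.symm else S.rot p.1.symm), s')

/-- The number of orbits of a function. -/
noncomputable def orbitCount {α : Type*} (f : α → α) : ℕ :=
  Nat.card (Quotient (Relation.EqvGen.setoid (fun x y => f x = y)))

/-- The scheme describes an embedding of `H` in a surface of Euler genus at most `g`.
Isolated vertices each bound one face; every other face is traced twice by `faceStep`,
so the number of faces is `orbitCount (faceStep) / 2` plus the number of isolated
vertices, and the Euler genus of the embedding is `2c - |V| + |E| - F`. -/
def GenusLE (S : EmbScheme H) (g : ℕ) : Prop :=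
  2 * Nat.card H.ConnectedComponent + Nat.card H.edgeSet ≤
    g + Nat.card W +
      (orbitCount S.faceStep / 2 + Nat.card {v : W | ∀ w, ¬ H.Adj v w})

/-- The cycle `e 0, e 1, …, e (m-1)` is a facial cycle of the embedding scheme `S`:
its consecutive darts are consecutive in a face traversal. -/
def IsFacialCycle (S : EmbScheme H) {m : ℕ} (e : ZMod m → W)
    (hadj : ∀ x : ZMod m, H.Adj (e x) (e (x + 1))) : Prop :=
  ∃ b : ZMod m → Bool, ∀ x : ZMod m,
    S.faceStep (⟨(e x, e (x + 1)), hadj x⟩, b x) =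
      (⟨(e (x + 1), e (x + 1 + 1)), hadj (x + 1)⟩, b (x + 1))

end EmbScheme

/-- `Hs` has a `C`-vortex of width less than `k`, where `C` is the cycle of `G₀` given by
`e`: the vertices common to `Hs` and `G₀` are exactly those of `C`, and `Hs` has a cycle
representation over `C` in which the model of each vertex of `C` contains that vertex and
every bag has at most `k` vertices. -/
def IsVortex {V : Type*} {G : SimpleGraph V} (Hs G₀ : G.Subgraph) {m : ℕ}
    (e : ZMod m → G₀.verts) (k : ℕ) : Prop :=
  Hs.verts ∩ G₀.verts = Subtype.val '' Set.range e ∧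
  ∃ model : Hs.verts → Set (ZMod m),
    (∀ v, ((ringGraph m).induce (model v)).Connected) ∧
    (∀ (x : ZMod m) (v : Hs.verts), (e x : V) = (v : V) → x ∈ model v) ∧
    (∀ ⦃u v⦄, Hs.coe.Adj u v → (model u ∩ model v).Nonempty) ∧
    (∀ t : ZMod m, {v : Hs.verts | t ∈ model v}.ncard ≤ k)

/-- `G` is `(g, p, a, k)`-almost-embeddable. -/
def AlmostEmbeddable {V : Type*} (G : SimpleGraph V) (g p a k : ℕ) : Prop :=
  ∃ A : Set V, A.ncard ≤ a ∧
  ∃ s : ℕ, s ≤ p ∧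
  ∃ (G₀ : G.Subgraph) (Gv : Fin s → G.Subgraph),
    (G₀ ⊔ ⨆ i, Gv i) = (⊤ : G.Subgraph).deleteVerts A ∧
    (∀ i j, i ≠ j → Disjoint (Gv i).verts (Gv j).verts) ∧
    ∃ S : EmbScheme G₀.coe, S.GenusLE g ∧
    ∃ (m : Fin s → ℕ) (e : ∀ i, ZMod (m i) → G₀.verts)
      (hadj : ∀ i x, G₀.coe.Adj (e i x) (e i (x + 1))),
      (∀ i, 3 ≤ m i) ∧
      (∀ i, Function.Injective (e i)) ∧
      (∀ i, S.IsFacialCycle (e i) (hadj i)) ∧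
      (∀ i j, i ≠ j → Disjoint (Set.range (e i)) (Set.range (e j))) ∧
      (∀ i, IsVortex (Gv i) G₀ (e i) k)

section Helpers
open Classical

theorem hx_min {α : Type*} [Preorder α]
    (hlin : ∀ a b z : α, a ≤ z → b ≤ z → a ≤ b ∨ b ≤ a) (L : List α)
    (hL : L.IsChain (fun a b => a ≤ b ∨ b ≤ a)) (hne : L ≠ []) :
    ∃ y ∈ L, ∀ a ∈ L, y ≤ a := by
  induction L with
  | nil => exact absurd rfl hne
  | cons a L ih =>
    cases L with
    | nil => exact ⟨a, by simp, by simp⟩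
    | cons b L =>
      rw [List.isChain_cons_cons] at hL
      obtain ⟨y, hy, hmin⟩ := ih hL.2 (by simp)
      have hyb := hmin b (by simp)
      have key : y ≤ a ∨ a ≤ y := by
        rcases hL.1 with h | h
        · exact (hlin _ _ _ h hyb).symm
        · exact Or.inl (hyb.trans h)
      rcases key with h | h
      · refine ⟨y, List.mem_cons_of_mem _ hy, ?_⟩
        intro c hc
        rcases List.mem_cons.1 hc with rfl | hc
        · exact h
        · exact hmin c hc
      · refine ⟨a, by simp, ?_⟩
        intro c hc
        rcases List.mem_cons.1 hc with rfl | hc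
        · exact le_rfl
        · exact h.trans (hmin c hc)

theorem hx_split {α : Type*} (y : α) (K : ℕ) : ∀ (n : ℕ) (L : List α), L.length ≤ n →
    (∀ A, A <:+: L → y ∉ A → A.length + 1 ≤ K) →
    L.length + 1 ≤ (L.count y + 1) * K := by
  intro n
  induction n with
  | zero =>
    intro L hn h
    have : L = [] := List.length_eq_zero_iff.1 (by omega)
    subst this
    simpa using h [] List.infix_rfl (by simp)
  | succ n ih =>
    intro L hn h
    by_cases hy : y ∈ L
    · obtain ⟨A, B, rfl, hA⟩ := List.eq_append_cons_of_mem hy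
      have h1 := h A (List.infix_append' [] A _) hA
      have h2 := ih B (by simp at hn; omega) (fun C hC hyC => h C
        (hC.trans ⟨A ++ [y], [], by simp⟩) hyC)
      have h3 : A.count y = 0 := List.count_eq_zero.2 hA
      simp only [List.length_append, List.length_cons, List.count_append, List.count_cons_self, h3]
      calc _ = (A.length + 1) + (B.length + 1) := by ring
        _ ≤ K + (B.count y + 1) * K := by omega
        _ = _ := by ring
    · have := h L List.infix_rfl hy
      rw [List.count_eq_zero.2 hy]
      omega

theorem hx_main {α : Type*} [Preorder α]
    (hlin : ∀ a b z : α, a ≤ z → b ≤ z → a ≤ b ∨ b ≤ a) (k : ℕ) : ∀ (w : ℕ) (L : List α) (y : α),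
    L.IsChain (fun a b => a ≤ b ∨ b ≤ a) → (∀ a, L.count a ≤ k) → (∀ a ∈ L, y ≤ a) →
    (∀ l, L.countP (fun a => decide (a ≤ l)) ≤ w + L.count y) →
    L.length + 1 ≤ (k + 1) ^ (w + 1) := by
  intro w
  induction w with
  | zero =>
    intro L y hL hk hy hw
    have := hx_split y 1 _ L le_rfl (by
      intro A hA hyA
      rcases A with _ | ⟨b, A⟩
      · simp
      · exfalso
        obtain ⟨s, t, rfl⟩ := hA
        have h1 := hw b
        have hyb : y ≤ b := hy b (by simp)
        have e1 : s.count y ≤ s.countP (fun a => decide (a ≤ b)) :=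
          List.countP_mono_left (by intro x _ hx; simp at hx; subst hx; simpa using hyb)
        have e2 : t.count y ≤ t.countP (fun a => decide (a ≤ b)) :=
          List.countP_mono_left (by intro x _ hx; simp at hx; subst hx; simpa using hyb)
        have e3 : (b :: A).count y = 0 := List.count_eq_zero.2 hyA
        have e4 : 0 < (b :: A).countP (fun a => decide (a ≤ b)) := by
          rw [List.countP_pos_iff]; exact ⟨b, by simp, by simp⟩
        simp only [List.countP_append, List.count_append] at h1
        omega)
    have := hk y
    simp
    omega
  | succ w ih =>
    intro L y hL hk hy hw
    have := hx_split y ((k+1)^(w+1)) _ L le_rfl (by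
      intro A hA hyA
      by_cases hne : A = []
      · subst hne
        simpa using Nat.one_le_pow _ _ (Nat.succ_pos k)
      · have hAc := hL.infix hA
        obtain ⟨y', hy', hmin⟩ := hx_min hlin A hAc hne
        apply ih A y' hAc (fun a => (hA.sublist.count_le a).trans (hk a)) hmin
        intro l
        have hpos : 0 < A.count y' := List.count_pos_iff.2 hy'
        by_cases hyl : y ≤ l
        · obtain ⟨s, t, rfl⟩ := hA
          have h1 := hw l
          have e1 : s.count y ≤ s.countP (fun a => decide (a ≤ l)) :=
            List.countP_mono_left (by intro x _ hx; simp at hx; subst hx; simpa using hyl)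
          have e2 : t.count y ≤ t.countP (fun a => decide (a ≤ l)) :=
            List.countP_mono_left (by intro x _ hx; simp at hx; subst hx; simpa using hyl)
          have e3 : A.count y = 0 := List.count_eq_zero.2 hyA
          simp only [List.countP_append, List.count_append] at h1
          omega
        · have : A.countP (fun a => decide (a ≤ l)) = 0 := by
            rw [List.countP_eq_zero]
            intro a ha
            simpa using fun h => hyl ((hy a (hA.subset ha)).trans h)
          omega)
    calc _ ≤ _ := this
      _ ≤ (k + 1) * (k+1)^(w+1) := Nat.mul_le_mul_right _ (by have := hk y; omega)
      _ = _ := by ring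

theorem hx_uniq {N : Type*} {T : SimpleGraph N} (hT : T.IsTree) {a b : N} {p q : T.Walk a b}
    (hp : p.IsPath) (hq : q.IsPath) : p = q :=
  (hT.existsUnique_path a b).unique hp hq

/-- The order of the tree `T` rooted at `x`. -/
def hxPre {N : Type*} {T : SimpleGraph N} (hT : T.IsTree) (x : N) : Preorder N where
  le a b := ∃ p : T.Walk x b, p.IsPath ∧ a ∈ p.support
  le_refl a := by
    obtain ⟨p, hp⟩ := hT.connected.exists_isPath x a
    exact ⟨p, hp, by simp⟩
  le_trans a b c := by
    rintro ⟨p, hp, ha⟩ ⟨q, hq, hb⟩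
    obtain ⟨q1, q2, h1, h2, rfl⟩ := hq.mem_support_iff_exists_append.1 hb
    rw [hx_uniq hT hp h1] at ha
    exact ⟨_, hq, by rw [SimpleGraph.Walk.mem_support_append_iff]; exact Or.inl ha⟩

theorem hx_lin {N : Type*} {T : SimpleGraph N} (hT : T.IsTree) (x : N) (a b z : N)
    (ha : (hxPre hT x).le a z) (hb : (hxPre hT x).le b z) :
    (hxPre hT x).le a b ∨ (hxPre hT x).le b a := by
  obtain ⟨p, hp, ha⟩ := ha
  obtain ⟨q, hq, hb⟩ := hb
  obtain rfl := hx_uniq hT hp hq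
  obtain ⟨q1, q2, h1, h2, rfl⟩ := hp.mem_support_iff_exists_append.1 hb
  rw [SimpleGraph.Walk.mem_support_append_iff] at ha
  rcases ha with ha | ha
  · exact Or.inl ⟨q1, h1, ha⟩
  · right
    obtain ⟨r1, r2, rfl⟩ := SimpleGraph.Walk.mem_support_iff_exists_append.1 ha
    rw [SimpleGraph.Walk.append_assoc] at hp
    exact ⟨_, hp.of_append_left, by simp [SimpleGraph.Walk.mem_support_append_iff]⟩

theorem hx_adj {N : Type*} {T : SimpleGraph N} (hT : T.IsTree) (x : N) {a b : N}
    (h : T.Adj a b) : (hxPre hT x).le a b ∨ (hxPre hT x).le b a := by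
  obtain ⟨p, hp⟩ := hT.connected.exists_isPath x a
  by_cases hb : b ∈ p.support
  · exact Or.inr ⟨p, hp, hb⟩
  · exact Or.inl ⟨p.concat h, hp.concat hb h, by simp [SimpleGraph.Walk.support_concat]⟩

theorem hx_least {N : Type*} [Finite N] {T : SimpleGraph N} (hT : T.IsTree) (x : N) (S : Set N)
    (hS : (T.induce S).Connected) : ∃ m ∈ S, ∀ z ∈ S, (hxPre hT x).le m z := by
  letI := hxPre hT x
  obtain ⟨⟨s, hs⟩⟩ := hS.nonempty
  obtain ⟨m, hm⟩ := S.toFinite.exists_minimal ⟨s, hs⟩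
  refine ⟨m, hm.1, fun z hz => ?_⟩
  obtain ⟨p⟩ := hS.preconnected ⟨m, hm.1⟩ ⟨z, hz⟩
  obtain ⟨y, hy, hmin⟩ := hx_min (hx_lin hT x) (p.support.map Subtype.val) (by
    rw [List.isChain_map]
    exact p.isChain_adj_support.imp (fun a b hab => hx_adj hT x hab))
    (by rw [ne_eq, List.map_eq_nil_iff]; exact p.support_ne_nil)
  have h1 : y ≤ m := hmin m (List.mem_map.2 ⟨⟨m, hm.1⟩, by simp, rfl⟩)
  have h2 : y ≤ z := hmin z (List.mem_map.2 ⟨⟨z, hz⟩, by simp, rfl⟩)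
  have hyS : y ∈ S := by
    obtain ⟨y', _, rfl⟩ := List.mem_map.1 hy
    exact y'.2
  exact (hm.2 hyS h1).trans h2

theorem hx_leaf {N : Type*} [Fintype N] {T : SimpleGraph N} (hT : T.IsTree) (x : N) :
    ∀ (n : ℕ) (l : N) (p : T.Walk x l), p.IsPath → Fintype.card N ≤ n + p.length →
    ∃ (l' : N) (q : T.Walk x l'), q.IsPath ∧ IsLeafNode T l' ∧ p.support ⊆ q.support := by
  intro n
  induction n with
  | zero => intro l p hp h; have := hp.length_lt; omega
  | succ n ih =>
    intro l p hp h
    by_cases hl : IsLeafNode T l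
    · exact ⟨l, p, hp, hl, fun _ h => h⟩
    · have : ∃ b, T.Adj l b ∧ b ∉ p.support := by
        by_contra! hc
        apply hl
        intro b hb c hc'
        rw [hT.isAcyclic.eq_penultimate_of_adj_end hp hb (hc b hb),
          hT.isAcyclic.eq_penultimate_of_adj_end hp hc' (hc c hc')]
      obtain ⟨b, hb, hbp⟩ := this
      obtain ⟨l', q, hq, hl', hs⟩ := ih b (p.concat hb) (hp.concat hbp hb) (by simp; omega)
      exact ⟨l', q, hq, hl', fun _ h => hs (p.support_subset_support_concat hb h)⟩

theorem hx_count {V : Type*} [Fintype V] (L : List V) (hL : L.Nodup) (hall : ∀ v, v ∈ L)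
    (P : V → Prop) : L.countP (fun v => decide (P v)) = {v | P v}.ncard := by
  rw [List.countP_eq_length_filter, ← List.toFinset_card_of_nodup (hL.filter _),
    ← Set.ncard_coe_finset]
  congr 1
  ext v
  simp [hall]

end Helpers

theorem stmt12 (k w : ℕ) {V : Type} [Fintype V] (G : SimpleGraph V) (hham : HasHamPath G)
    {N : Type} [Fintype N] (T : SimpleGraph N) (hT : T.IsTree) (R : TreeRep G T)
    (hwidth : R.WidthLT k)
    (hnode : ∃ x : N, ∀ (l : N) (p : T.Walk x l), p.IsPath → IsLeafNode T l →
      R.pathWeight p ≤ w + (R.bag x).ncard) :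
    Fintype.card V ≤ (k + 1) ^ (w + 1) - 1 := by
  classical
  obtain ⟨u, v, p, hp, hall⟩ := hham
  obtain ⟨x, hx⟩ := hnode
  letI := hxPre hT x
  choose m hm hmin using fun v => hx_least hT x (R.model v) (R.model_connected v)
  have hcard : p.support.length = Fintype.card V := by
    rw [← List.toFinset_card_of_nodup hp.support_nodup, ← Finset.card_univ]
    congr 1
    ext v
    simp [hall]
  have hbx : ∀ v, m v = x ↔ v ∈ R.bag x := by
    intro v
    constructor
    · rintro h
      have := hm v
      rwa [h] at this
    · intro h
      obtain ⟨q, hq, hmq⟩ := hmin v x h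
      obtain rfl := hx_uniq hT hq SimpleGraph.Walk.IsPath.nil
      simpa using hmq
  have hcnt : ∀ a, (p.support.map m).count a = {v | m v = a}.ncard := by
    intro a
    rw [← hx_count p.support hp.support_nodup hall (fun v => m v = a), List.count, List.countP_map]
    congr 1
  have key := hx_main (hx_lin hT x) k w (p.support.map m) x (by
      rw [List.isChain_map]
      refine p.isChain_adj_support.imp (fun a b hab => ?_)
      obtain ⟨z, hza, hzb⟩ := R.adj_meet hab
      exact hx_lin hT x _ _ z (hmin a z hza) (hmin b z hzb))
    (by
      intro a
      rw [hcnt]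
      refine le_trans (Set.ncard_le_ncard ?_ (Set.toFinite _)) (hwidth a)
      rintro v rfl
      exact hm v)
    (by
      intro a _
      obtain ⟨q, hq⟩ := hT.connected.exists_isPath x a
      exact ⟨q, hq, by simp⟩)
    (by
      intro l
      obtain ⟨q, hq⟩ := hT.connected.exists_isPath x l
      obtain ⟨l', q', hq', hl', hs⟩ := hx_leaf hT x _ l q hq (Nat.le_add_right _ _)
      have h1 := hx l' q' hq' hl'
      have h2 : (p.support.map m).count x = (R.bag x).ncard := by
        rw [hcnt]
        congr 1
        ext v
        exact hbx v
      rw [h2]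
      refine le_trans ?_ h1
      rw [List.countP_map]
      refine le_trans (le_of_eq (hx_count p.support hp.support_nodup hall (fun v => m v ≤ l))) ?_
      refine Set.ncard_le_ncard ?_ (Set.toFinite _)
      rintro v ⟨q2, hq2, hv⟩
      obtain rfl := hx_uniq hT hq hq2
      exact ⟨m v, hs hv, hm v⟩)
  rw [List.length_map, hcard] at key
  omega
end

section
/- For all natural numbers g, p, a, k with k ≥ 2 there is a constant c > 0 such that the following holds: if G is a (g, p, a, k)-almost-embeddable graph that has a Hamiltonian path and order n, then G has an induced path of order at least c·(log₂ n)^(1/k). -/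
open SimpleGraph Real

/-! ## Connected sets and homology of an embedding scheme -/

/-- `S` is a nonempty connected set of vertices. -/
def ConnSet {V : Type*} (G : SimpleGraph V) (S : Set V) : Prop :=
  S.Nonempty ∧ ∀ u ∈ S, ∀ v ∈ S, Relation.ReflTransGen (fun a b => G.Adj a b ∧ b ∈ S) u v

/-- A bouquet of `t` minors `K₅` sharing one branch set. -/
def IsBouquet {V : Type*} (G : SimpleGraph V) (t : ℕ)
    (A : Option (Fin t × Fin 4) → Set V) : Prop :=
  (∀ l, ConnSet G (A l)) ∧ (∀ l l', l ≠ l' → Disjoint (A l) (A l')) ∧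
  (∀ i j, ∃ u ∈ A none, ∃ v ∈ A (some (i, j)), G.Adj u v) ∧
  (∀ i j j', j < j' → ∃ u ∈ A (some (i, j)), ∃ v ∈ A (some (i, j')), G.Adj u v)

namespace EmbHom

open Classical

noncomputable section

variable {U : Type*} [Fintype U] {H : SimpleGraph U}

/-- Boundary of a 1-chain. -/
def bd1 (H : SimpleGraph U) : (H.edgeSet → ZMod 2) →ₗ[ZMod 2] (U → ZMod 2) where
  toFun z u := ∑ e : H.edgeSet, if u ∈ (e : Sym2 U) then z e else 0
  map_add' x y := by
    funext u; simp only [Pi.add_apply, ← Finset.sum_add_distrib]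
    refine Finset.sum_congr rfl fun e _ => ?_
    split_ifs <;> simp
  map_smul' c x := by
    funext u; simp only [Pi.smul_apply, smul_eq_mul, RingHom.id_apply, Finset.mul_sum]
    refine Finset.sum_congr rfl fun e _ => ?_
    split_ifs <;> simp

lemma bd1_apply (z : H.edgeSet → ZMod 2) (u : U) :
    bd1 H z u = ∑ e : H.edgeSet, if u ∈ (e : Sym2 U) then z e else 0 := rfl

lemma bd1_single {a b : U} (h : H.Adj a b) :
    bd1 H (Pi.single ⟨s(a, b), h⟩ 1) = Pi.single a 1 + Pi.single b 1 := by
  funext u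
  rw [bd1_apply, Finset.sum_eq_single (⟨s(a, b), h⟩ : H.edgeSet)]
  · have hab := h.ne
    simp only [Sym2.mem_iff, Pi.single_eq_same, Pi.add_apply, Pi.single_apply]
    by_cases h1 : u = a
    · subst h1; simp [hab]
    · by_cases h2 : u = b <;> simp [h1, h2, hab.symm]
  · intro e _ he
    simp [he]
  · simp

lemma z2 (x : ZMod 2) : x + x = 0 := CharTwo.add_self_eq_zero x

lemma chain_of_conn {S : Set U} {u v : U} (hu : u ∈ S)
    (h : Relation.ReflTransGen (fun a b => H.Adj a b ∧ b ∈ S) u v) :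
    ∃ z : H.edgeSet → ZMod 2, (∀ e, z e ≠ 0 → ∀ x ∈ (e : Sym2 U), x ∈ S) ∧
      bd1 H z = Pi.single u 1 + Pi.single v 1 := by
  induction h with
  | refl => exact ⟨0, by simp, by
      rw [map_zero]; funext x; simp only [Pi.add_apply, Pi.zero_apply]; exact (z2 _).symm⟩
  | @tail b c hb hc ih =>
    obtain ⟨z, hz, hzb⟩ := ih
    have hbS : b ∈ S := by
      rcases Relation.ReflTransGen.cases_tail hb with h | ⟨d, _, h⟩
      · exact h ▸ hu
      · exact h.2
    refine ⟨z + Pi.single ⟨s(b, c), hc.1⟩ 1, ?_, ?_⟩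
    · intro e he x hx
      by_cases h1 : e = ⟨s(b, c), hc.1⟩
      · subst h1
        simp only [Sym2.mem_iff] at hx
        rcases hx with rfl | rfl
        · exact hbS
        · exact hc.2
      · refine hz e ?_ x hx
        simpa [Pi.single_apply, h1] using he
    · rw [map_add, hzb, bd1_single]
      funext x
      simp only [Pi.add_apply]
      have := z2 ((Pi.single b 1 : U → ZMod 2) x)
      linear_combination this

lemma finrank_Z (H : SimpleGraph U) : Module.finrank (ZMod 2) (LinearMap.ker (bd1 H)) + Nat.card U ≤
    Nat.card H.edgeSet + Nat.card H.ConnectedComponent := by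
  have h1 := LinearMap.finrank_range_add_finrank_ker (bd1 H)
  rw [Module.finrank_fintype_fun_eq_card] at h1
  have : Fintype H.ConnectedComponent := Fintype.ofFinite _
  set s : H.ConnectedComponent → (U → ZMod 2) := fun c => Pi.single c.out 1 with hs
  have h2 : LinearMap.range (bd1 H) ⊔ Submodule.span (ZMod 2) (Set.range s) = ⊤ := by
    rw [eq_top_iff, ← (Pi.basisFun (ZMod 2) U).span_eq, Submodule.span_le]
    rintro _ ⟨v, rfl⟩
    have hr : H.Reachable v (H.connectedComponentMk v).out := by
      apply SimpleGraph.ConnectedComponent.exact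
      exact (Quot.out_eq _).symm
    rw [SimpleGraph.reachable_iff_reflTransGen] at hr
    obtain ⟨z, _, hz⟩ := chain_of_conn (H := H) (S := Set.univ) (Set.mem_univ v)
      (Relation.ReflTransGen.mono (fun a b h => ⟨h, Set.mem_univ b⟩) _ _ hr)
    have : (Pi.basisFun (ZMod 2) U) v = bd1 H z + s (H.connectedComponentMk v) := by
      rw [hz]; funext x
      simp only [Pi.basisFun_apply, Pi.add_apply, hs]
      linear_combination -z2 ((Pi.single (H.connectedComponentMk v).out 1 : U → ZMod 2) x)
    rw [this]
    exact Submodule.add_mem_sup ⟨z, rfl⟩ (Submodule.subset_span ⟨_, rfl⟩)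
  have h3 := Submodule.finrank_add_le_finrank_add_finrank (LinearMap.range (bd1 H))
    (Submodule.span (ZMod 2) (Set.range s))
  rw [h2, finrank_top, Module.finrank_fintype_fun_eq_card] at h3
  have h4 := finrank_range_le_card (R := ZMod 2) s
  rw [Set.finrank] at h4
  simp only [Nat.card_eq_fintype_card] at *
  omega

end

end EmbHom


namespace EmbHom

set_option linter.unusedSectionVars false

open Classical

noncomputable section

variable {U : Type*} [Fintype U] {H : SimpleGraph U}

/-- Reversal of a state of the face-tracing procedure. -/
def rev (S : EmbScheme H) (x : H.Dart × Bool) : H.Dart × Bool :=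
  (x.1.symm, !(xor x.2 (S.sign x.1.edge)))

lemma rev_rev (S : EmbScheme H) (x : H.Dart × Bool) : rev S (rev S x) = x := by
  obtain ⟨d, b⟩ := x
  simp only [rev, SimpleGraph.Dart.symm_symm, SimpleGraph.Dart.edge_symm]
  cases b <;> cases S.sign d.edge <;> rfl

lemma step_rev_step (S : EmbScheme H) (x : H.Dart × Bool) :
    S.faceStep (rev S (S.faceStep x)) = rev S x := by
  obtain ⟨d, b⟩ := x
  simp only [rev, EmbScheme.faceStep, SimpleGraph.Dart.symm_symm, SimpleGraph.Dart.edge_symm]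
  set s := xor b (S.sign d.edge) with hs
  cases hs' : s
  · simp
  · simp

/-- The relation generating faces. -/
def faceRel (S : EmbScheme H) (x y : H.Dart × Bool) : Prop := S.faceStep x = y ∨ rev S x = y

/-- The faces of a scheme. -/
def Face (S : EmbScheme H) := Quot (faceRel S)

/-- The face at a state. -/
def fc (S : EmbScheme H) (d : H.Dart) (b : Bool) : Face S := Quot.mk _ (d, b)

instance (S : EmbScheme H) : Finite (Face S) := Quot.finite _

lemma fc_rev (S : EmbScheme H) (d : H.Dart) (b : Bool) :
    fc S d b = fc S d.symm (!(xor b (S.sign d.edge))) :=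
  Quot.sound (Or.inr rfl)

lemma fc_rot (S : EmbScheme H) (d : H.Dart) : fc S d true = fc S (S.rot d) false := by
  rw [fc_rev]
  refine Quot.sound (Or.inl ?_)
  simp only [EmbScheme.faceStep, SimpleGraph.Dart.symm_symm, SimpleGraph.Dart.edge_symm]
  cases S.sign d.edge <;> simp

lemma orbit_le (S : EmbScheme H) : EmbScheme.orbitCount S.faceStep ≤ 2 * Nat.card (Face S) := by
  unfold EmbScheme.orbitCount
  set st := Relation.EqvGen.setoid (fun x y : H.Dart × Bool => S.faceStep x = y) with hst
  let mk : H.Dart × Bool → Quotient st := fun x => Quotient.mk st x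
  have hstep : ∀ x, mk x = mk (S.faceStep x) := fun x =>
    Quotient.sound (Relation.EqvGen.rel _ _ rfl)
  have hτ : ∀ x y, mk x = mk y → mk (rev S x) = mk (rev S y) := by
    intro x y h
    have h' : Relation.EqvGen (fun x y : H.Dart × Bool => S.faceStep x = y) x y := Quotient.exact h
    clear h
    induction h' with
    | rel a b h =>
      subst h
      rw [← step_rev_step S a]
      exact (hstep _).symm
    | refl => rfl
    | symm _ _ _ ih => exact ih.symm
    | trans _ _ _ _ _ h1 h2 => exact h1.trans h2
  have key : ∀ x y, (Quot.mk (faceRel S) x = Quot.mk (faceRel S) y) →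
      mk x = mk y ∨ mk (rev S x) = mk y := by
    intro x y h
    have h' := Quot.eqvGen_exact h
    clear h
    induction h' with
    | rel a b h =>
      rcases h with h | h
      · left; rw [← h]; exact hstep a
      · right; rw [h]
    | refl => left; rfl
    | symm a b _ ih =>
      rcases ih with h | h
      · left; exact h.symm
      · right; rw [← hτ _ _ h, rev_rev]
    | trans a b c _ _ h1 h2 =>
      rcases h1 with h1 | h1 <;> rcases h2 with h2 | h2
      · left; exact h1.trans h2
      · right; exact (hτ _ _ h1).trans h2
      · right; exact h1.trans h2
      · left; rw [← h2, ← hτ _ _ h1, rev_rev]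
  let p : Quotient st → Face S := fun o => Quot.mk (faceRel S) o.out
  have hout : ∀ o : Quotient st, mk o.out = o := fun o => Quotient.out_eq o
  let F : Quotient st → Face S × Bool := fun o => (p o, decide (o = mk (p o).out))
  have hp : ∀ o, o = mk (p o).out ∨ o = mk (rev S (p o).out) := by
    intro o
    rcases key (p o).out o.out (Quot.out_eq _) with h | h
    · left; rw [h, hout]
    · right; rw [h, hout]
  have hF : Function.Injective F := by
    intro o o' h
    simp only [F, Prod.mk.injEq, decide_eq_decide] at h
    obtain ⟨h1, h2⟩ := h
    have a1 := hp o
    have a2 := hp o'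
    rw [← h1] at a2 h2
    by_cases hc : o = mk (p o).out
    · rw [hc, ← h2.1 hc]
    · have hc' := fun q => hc (h2.2 q)
      rw [a1.resolve_left hc, ← a2.resolve_left hc']
  have := Nat.card_le_card_of_injective F hF
  rw [Nat.card_prod] at this
  have hb : Nat.card Bool = 2 := by simp
  rw [hb] at this
  omega

/-- Isolated vertices. -/
abbrev Iso (H : SimpleGraph U) := {v : U | ∀ w, ¬ H.Adj v w}

/-- A dart of an edge. -/
def dartOf (e : H.edgeSet) : H.Dart :=
  Classical.choose (show ∃ d : H.Dart, d.edge = e by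
    obtain ⟨e, he⟩ := e
    induction e with
    | _ a b => exact ⟨⟨(a, b), he⟩, rfl⟩)

lemma dartOf_edge (e : H.edgeSet) : (dartOf e).edge = e :=
  Classical.choose_spec (show ∃ d : H.Dart, d.edge = e by
    obtain ⟨e, he⟩ := e
    induction e with
    | _ a b => exact ⟨⟨(a, b), he⟩, rfl⟩)

/-- The boundary of a 2-chain. -/
def bd2 (S : EmbScheme H) : ((Face S ⊕ Iso H) → ZMod 2) →ₗ[ZMod 2] (H.edgeSet → ZMod 2) where
  toFun X e := X (Sum.inl (fc S (dartOf e) false)) + X (Sum.inl (fc S (dartOf e) true))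
  map_add' x y := by
    funext u; simp only [Pi.add_apply]; ring
  map_smul' c x := by
    funext u; simp only [Pi.smul_apply, smul_eq_mul, RingHom.id_apply]; ring

lemma fc_symm_sum {M : Type*} [AddCommMonoid M] (S : EmbScheme H) (X : Face S → M) (d : H.Dart) :
    X (fc S d.symm false) + X (fc S d.symm true) = X (fc S d false) + X (fc S d true) := by
  rw [fc_rev S d false, fc_rev S d true]
  cases S.sign d.edge
  · simp [add_comm]
  · simp

lemma bd2_apply (S : EmbScheme H) (X : (Face S ⊕ Iso H) → ZMod 2) (d : H.Dart) :
    bd2 S X ⟨d.edge, d.edge_mem⟩ = X (Sum.inl (fc S d false)) + X (Sum.inl (fc S d true)) := by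
  have h : (dartOf (⟨d.edge, d.edge_mem⟩ : H.edgeSet)).edge = d.edge := dartOf_edge _
  rw [SimpleGraph.dart_edge_eq_iff] at h
  change X (Sum.inl (fc S (dartOf _) false)) + X (Sum.inl (fc S (dartOf _) true)) = _
  rcases h with h | h <;> rw [h]
  exact fc_symm_sum S (fun f => X (Sum.inl f)) d

lemma bd1_dart (z : H.edgeSet → ZMod 2) (u : U) :
    bd1 H z u = ∑ d : H.Dart with d.fst = u, z ⟨d.edge, d.edge_mem⟩ := by
  rw [bd1_apply, ← Finset.sum_filter]
  symm
  refine Finset.sum_bij (fun d _ => (⟨d.edge, d.edge_mem⟩ : H.edgeSet)) ?_ ?_ ?_ ?_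
  · intro d hd
    simp only [Finset.mem_filter, Finset.mem_univ, true_and] at hd ⊢
    rw [← hd]; exact Sym2.mem_mk_left _ _
  · intro d hd d' hd' h
    simp only [Finset.mem_filter, Finset.mem_univ, true_and] at hd hd'
    have h := congrArg Subtype.val h
    simp only at h
    rw [SimpleGraph.dart_edge_eq_iff] at h
    rcases h with h | h
    · exact h
    · exfalso
      have h1 : d.fst = d'.snd := by rw [h]; rfl
      exact d'.adj.ne (by rw [← h1, hd, hd'])
  · intro e he
    simp only [Finset.mem_filter, Finset.mem_univ, true_and] at he
    obtain ⟨e, hE⟩ := e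
    obtain ⟨v, rfl⟩ := Sym2.mem_iff_exists.1 he
    exact ⟨⟨(u, v), hE⟩, by simp, rfl⟩
  · intro d _; rfl

lemma bd1_bd2 (S : EmbScheme H) (X : (Face S ⊕ Iso H) → ZMod 2) : bd1 H (bd2 S X) = 0 := by
  funext u
  rw [bd1_dart]
  simp only [bd2_apply, Finset.sum_add_distrib, Pi.zero_apply]
  have : ∑ d : H.Dart with d.fst = u, X (Sum.inl (fc S d true)) =
      ∑ d : H.Dart with d.fst = u, X (Sum.inl (fc S d false)) := by
    refine Finset.sum_equiv S.rot ?_ ?_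
    · intro d; simp [S.rot_fst]
    · intro d _; rw [fc_rot]
  rw [this]; exact z2 _

/-- The component of a face. -/
def comp (S : EmbScheme H) : (Face S ⊕ Iso H) → H.ConnectedComponent :=
  Sum.elim (Quot.lift (fun x => H.connectedComponentMk x.1.fst) (by
    rintro ⟨d, b⟩ y (rfl | rfl)
    · have : (S.faceStep (d, b)).1.fst = d.snd := by
        simp only [EmbScheme.faceStep]
        split_ifs
        · have := S.rot_fst (S.rot.symm d.symm)
          rw [Equiv.apply_symm_apply] at this
          rw [← this]; rfl
        · rw [S.rot_fst]; rfl
      simp only [this]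
      exact SimpleGraph.ConnectedComponent.sound d.adj.reachable
    · exact SimpleGraph.ConnectedComponent.sound d.adj.reachable))
    (fun v => H.connectedComponentMk v.1)

lemma ker_const (S : EmbScheme H) (X : (Face S ⊕ Iso H) → ZMod 2) (hX : bd2 S X = 0) :
    Function.FactorsThrough X (comp S) := by
  have h0 : ∀ d, X (Sum.inl (fc S d false)) = X (Sum.inl (fc S d true)) := by
    intro d
    have := congrFun hX ⟨d.edge, d.edge_mem⟩
    rw [bd2_apply] at this
    exact CharTwo.add_eq_zero.1 this
  have h1 : ∀ d b, X (Sum.inl (fc S d b)) = X (Sum.inl (fc S d false)) := by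
    intro d b; cases b
    · rfl
    · exact (h0 d).symm
  have hrot : ∀ d (n : ℕ), X (Sum.inl (fc S ((S.rot ^ n) d) false)) = X (Sum.inl (fc S d false)) := by
    intro d n
    induction n with
    | zero => rfl
    | succ n ih => rw [pow_succ', Equiv.Perm.mul_apply, ← fc_rot, h1, ih]
  have hfst : ∀ d d' : H.Dart, d.fst = d'.fst →
      X (Sum.inl (fc S d' false)) = X (Sum.inl (fc S d false)) := by
    intro d d' h
    obtain ⟨n, rfl⟩ := S.rot_cyclic d d' h
    exact hrot d n
  have hsymm : ∀ d : H.Dart, X (Sum.inl (fc S d.symm false)) = X (Sum.inl (fc S d false)) := by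
    intro d
    rw [fc_rev S d false]; exact (h1 _ _).symm
  have hreach : ∀ d : H.Dart, ∀ v, Relation.ReflTransGen H.Adj d.fst v → ∀ d' : H.Dart, d'.fst = v →
      X (Sum.inl (fc S d' false)) = X (Sum.inl (fc S d false)) := by
    intro d v h
    induction h with
    | refl => intro d' h; exact hfst _ _ h.symm
    | @tail b c _ hbc ih =>
      intro d' hd'
      have e1 := ih ⟨(b, c), hbc⟩ rfl
      have e2 := hsymm ⟨(b, c), hbc⟩
      rw [hfst (SimpleGraph.Dart.symm ⟨(b, c), hbc⟩) d' (by rw [hd']; rfl), e2, e1]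
  have hiso : ∀ v : Iso H, ∀ u, H.Reachable v.1 u → u = v.1 := by
    intro v u h
    rw [SimpleGraph.reachable_iff_reflTransGen] at h
    rcases Relation.ReflTransGen.cases_head h with h | ⟨c, hc, _⟩
    · exact h.symm
    · exact absurd hc (v.2 c)
  rintro (a | a) (b | b) hab
  · induction a using Quot.ind with | _ a
    induction b using Quot.ind with | _ b
    have := SimpleGraph.ConnectedComponent.exact hab
    rw [SimpleGraph.reachable_iff_reflTransGen] at this
    have e := hreach a.1 b.1.fst this b.1 rfl
    change X (Sum.inl (fc S a.1 a.2)) = X (Sum.inl (fc S b.1 b.2))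
    rw [h1, h1 b.1, e]
  · exfalso
    induction a using Quot.ind with | _ a
    have := hiso b _ (SimpleGraph.ConnectedComponent.exact hab).symm
    have h := a.1.adj
    rw [this] at h
    exact b.2 _ h
  · exfalso
    induction b using Quot.ind with | _ b
    have := hiso a _ (SimpleGraph.ConnectedComponent.exact hab)
    have h := b.1.adj
    rw [this] at h
    exact a.2 _ h
  · have := hiso a _ (SimpleGraph.ConnectedComponent.exact hab)
    congr 2
    exact Subtype.ext this.symm

lemma finrank_B (S : EmbScheme H) : EmbScheme.orbitCount S.faceStep / 2 + Nat.card (Iso H) ≤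
    Module.finrank (ZMod 2) (LinearMap.range (bd2 S)) + Nat.card H.ConnectedComponent := by
  have : Fintype (Face S) := Fintype.ofFinite _
  have : Fintype H.ConnectedComponent := Fintype.ofFinite _
  have h1 := LinearMap.finrank_range_add_finrank_ker (bd2 S)
  rw [Module.finrank_fintype_fun_eq_card, Fintype.card_sum] at h1
  have h2 : LinearMap.ker (bd2 S) ≤ LinearMap.range (LinearMap.funLeft (ZMod 2) (ZMod 2) (comp S)) := by
    intro X hX
    have hf := ker_const S X hX
    refine ⟨Function.extend (comp S) X 0, ?_⟩
    funext a
    exact hf.extend_apply _ _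
  have h3 := Submodule.finrank_mono h2
  have h4 := LinearMap.finrank_range_le (LinearMap.funLeft (ZMod 2) (ZMod 2) (comp S))
  rw [Module.finrank_fintype_fun_eq_card] at h4
  have h5 := orbit_le S
  simp only [Nat.card_eq_fintype_card] at *
  omega

/-- Any `g+1` cycles satisfy a nontrivial relation modulo face boundaries. -/
lemma homology (S : EmbScheme H) (g : ℕ) (hg : S.GenusLE g)
    (z : Fin (g + 1) → (H.edgeSet → ZMod 2)) (hz : ∀ i, bd1 H (z i) = 0) :
    ∃ c : Fin (g + 1) → ZMod 2, (∃ i, c i ≠ 0) ∧ ∃ X, bd2 S X = ∑ i, c i • z i := by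
  have hA := finrank_Z H
  have hB := finrank_B S
  unfold EmbScheme.GenusLE at hg
  have hle : LinearMap.range (bd2 S) ≤ LinearMap.ker (bd1 H) := by
    rintro _ ⟨X, rfl⟩; exact bd1_bd2 S X
  have hdim : Module.finrank (ZMod 2) (LinearMap.ker (bd1 H)) ≤
      Module.finrank (ZMod 2) (LinearMap.range (bd2 S)) + g := by
    have e : Nat.card (Iso H) = Nat.card {v : U | ∀ w, ¬ H.Adj v w} := rfl
    rw [e] at hB
    omega
  by_contra hcon
  push Not at hcon
  let B' := (LinearMap.range (bd2 S)).submoduleOf (LinearMap.ker (bd1 H))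
  let y : Fin (g + 1) → (LinearMap.ker (bd1 H)) ⧸ B' := fun i => B'.mkQ ⟨z i, hz i⟩
  have hli : LinearIndependent (ZMod 2) y := by
    rw [Fintype.linearIndependent_iff]
    intro c hc i
    by_contra hi
    have h0 : B'.mkQ (∑ i, c i • (⟨z i, hz i⟩ : LinearMap.ker (bd1 H))) = 0 := by
      rw [map_sum, ← hc]; simp [y]
    rw [Submodule.mkQ_apply, Submodule.Quotient.mk_eq_zero] at h0
    obtain ⟨X, hX⟩ := (show ((∑ i, c i • (⟨z i, hz i⟩ : LinearMap.ker (bd1 H)) :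
      LinearMap.ker (bd1 H)) : H.edgeSet → ZMod 2) ∈ LinearMap.range (bd2 S) from h0)
    refine hcon c ⟨i, hi⟩ X ?_
    rw [hX]; simp
  have h1 := hli.fintype_card_le_finrank
  have h2 := Submodule.finrank_quotient_add_finrank B'
  have h3 : Module.finrank (ZMod 2) B' = Module.finrank (ZMod 2) (LinearMap.range (bd2 S)) :=
    (Submodule.submoduleOfEquivOfLe hle).finrank_eq
  rw [Fintype.card_fin] at h1
  omega

end

end EmbHom


namespace EmbHom

/-- Left ends of the edges of `K₅`. -/
def kl : Fin 10 → Option (Fin 4) :=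
  ![none, none, none, none, some 0, some 0, some 0, some 1, some 1, some 2]

/-- Right ends of the edges of `K₅`. -/
def kr : Fin 10 → Option (Fin 4) :=
  ![some 0, some 1, some 2, some 3, some 1, some 2, some 3, some 2, some 3, some 3]

lemma k5_six : ∀ y4 y5 y6 y7 y8 y9 : ZMod 2,
    ¬ (y4 + y5 + y6 = 0 ∧ y4 + y7 + y8 = 0 ∧ y5 + y7 + y9 = 0 ∧ y6 + y8 + y9 = 0 ∧
      y4 = 0 ∧ y5 = 0 ∧ y6 = 0 ∧ y7 = 0 ∧ y8 = 0 ∧ y9 = 0) →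
    3 ≤ (if y4 + y5 + y6 ≠ 0 then 1 else 0) + (if y4 + y7 + y8 ≠ 0 then 1 else 0) +
      (if y5 + y7 + y9 ≠ 0 then 1 else 0) + (if y6 + y8 + y9 ≠ 0 then 1 else 0) +
      (if y4 ≠ 0 then 1 else 0) + (if y5 ≠ 0 then 1 else 0) + (if y6 ≠ 0 then 1 else 0) +
      (if y7 ≠ 0 then 1 else 0) + (if y8 ≠ 0 then 1 else 0) + (if y9 ≠ 0 then 1 else 0) := by
  decide

lemma sum_ten {M : Type*} [AddCommMonoid M] (f : Fin 10 → M) : ∑ p, f p =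
    f 0 + f 1 + f 2 + f 3 + f 4 + f 5 + f 6 + f 7 + f 8 + f 9 := by
  rw [Fin.sum_univ_castSucc, Fin.sum_univ_castSucc, Fin.sum_univ_eight]
  rfl

lemma k5_weight (y : Fin 10 → ZMod 2)
    (h : ∀ a : Fin 4, ∑ p, (if kl p = some a ∨ kr p = some a then y p else 0) = 0)
    (hy : y ≠ 0) : 3 ≤ (Finset.univ.filter fun p => y p ≠ 0).card := by
  have h0 := h 0
  have h1 := h 1
  have h2 := h 2
  have h3 := h 3
  rw [sum_ten] at h0 h1 h2 h3
  have e0 : y 0 = y 4 + y 5 + y 6 := by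
    have : y 0 + (y 4 + y 5 + y 6) = 0 := by
      rw [← h0]; simp [kl, kr]; ring
    exact CharTwo.add_eq_zero.1 this
  have e1 : y 1 = y 4 + y 7 + y 8 := by
    have : y 1 + (y 4 + y 7 + y 8) = 0 := by
      rw [← h1]; simp [kl, kr]; ring
    exact CharTwo.add_eq_zero.1 this
  have e2 : y 2 = y 5 + y 7 + y 9 := by
    have : y 2 + (y 5 + y 7 + y 9) = 0 := by
      rw [← h2]; simp [kl, kr]; ring
    exact CharTwo.add_eq_zero.1 this
  have e3 : y 3 = y 6 + y 8 + y 9 := by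
    have : y 3 + (y 6 + y 8 + y 9) = 0 := by
      rw [← h3]; simp [kl, kr]; ring
    exact CharTwo.add_eq_zero.1 this
  rw [Finset.card_filter, sum_ten, e0, e1, e2, e3]
  apply k5_six
  rintro ⟨a0, a1, a2, a3, a4, a5, a6, a7, a8, a9⟩
  apply hy
  funext p
  rw [← e0] at a0; rw [← e1] at a1; rw [← e2] at a2; rw [← e3] at a3
  fin_cases p <;> assumption

open Classical in
lemma k5_dual {C : Type*} [Fintype C] (c0 c1 : Fin 10 → C)
    (heven : ∀ X : C → ZMod 2, ∀ a : Fin 4,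
      ∑ p, (if kl p = some a ∨ kr p = some a then X (c0 p) + X (c1 p) else 0) = 0)
    (hspan : ∀ q : Fin 6, ∃ X : C → ZMod 2, ∀ q' : Fin 6,
      X (c0 (Fin.natAdd 4 q')) + X (c1 (Fin.natAdd 4 q')) = if q' = q then 1 else 0) : False := by
  let y : C → Fin 10 → ZMod 2 := fun c p =>
    (Pi.single c 1 : C → ZMod 2) (c0 p) + (Pi.single c 1 : C → ZMod 2) (c1 p)
  let Q : Finset C := Finset.univ.filter fun c => y c ≠ 0
  have hw : ∀ c ∈ Q, 3 ≤ (Finset.univ.filter fun p => y c p ≠ 0).card := by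
    intro c hc
    exact k5_weight _ (heven _) (Finset.mem_filter.1 hc).2
  have hQ : 3 * Q.card ≤ 20 := by
    calc 3 * Q.card = ∑ c ∈ Q, 3 := by simp [mul_comm]
      _ ≤ ∑ c ∈ Q, (Finset.univ.filter fun p => y c p ≠ 0).card := Finset.sum_le_sum hw
      _ ≤ ∑ c, (Finset.univ.filter fun p => y c p ≠ 0).card :=
        Finset.sum_le_univ_sum_of_nonneg (fun _ => Nat.zero_le _)
      _ = ∑ p : Fin 10, (Finset.univ.filter fun c => y c p ≠ 0).card := by
        simp only [Finset.card_filter]; exact Finset.sum_comm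
      _ ≤ ∑ p : Fin 10, 2 := by
        refine Finset.sum_le_sum fun p _ => ?_
        calc _ ≤ ({c0 p, c1 p} : Finset C).card := by
              apply Finset.card_le_card
              intro c hc
              rw [Finset.mem_filter] at hc
              by_contra hn
              simp only [Finset.mem_insert, Finset.mem_singleton, not_or] at hn
              apply hc.2
              simp [y, Pi.single_apply, Ne.symm hn.1, Ne.symm hn.2]
          _ ≤ 2 := Finset.card_le_two
      _ = 20 := by simp
  have hsum : ∀ p, ∑ c, y c p = 0 := by
    intro p
    simp only [y, Finset.sum_add_distrib, Pi.single_apply]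
    simp
    exact CharTwo.add_self_eq_zero _
  obtain ⟨cs, hcs⟩ : ∃ cs : C, (Q.erase cs).card ≤ 5 := by
    rcases Q.eq_empty_or_nonempty with h | ⟨c, hc⟩
    · exact ⟨c0 0, by rw [h]; simp⟩
    · refine ⟨c, ?_⟩
      rw [Finset.card_erase_of_mem hc]; omega
  let y' : C → Fin 6 → ZMod 2 := fun c q => y c (Fin.natAdd 4 q)
  let M := Submodule.span (ZMod 2) (((Q.erase cs).image y' : Finset _) : Set (Fin 6 → ZMod 2))
  have hM1 : ∀ c, c ≠ cs → y' c ∈ M := by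
    intro c hc
    by_cases h : c ∈ Q
    · apply Submodule.subset_span
      rw [Finset.mem_coe]
      exact Finset.mem_image_of_mem _ (Finset.mem_erase.2 ⟨hc, h⟩)
    · have : y c = 0 := by simpa [Q] using h
      have : y' c = 0 := by funext q; simp [y', this]
      rw [this]; exact M.zero_mem
  have hM2 : ∀ c, y' c ∈ M := by
    intro c
    by_cases hc : c = cs
    · subst hc
      have : y' c = - ∑ c' ∈ Finset.univ.erase c, y' c' := by
        rw [eq_neg_iff_add_eq_zero, Finset.add_sum_erase _ _ (Finset.mem_univ c)]
        funext q
        rw [Finset.sum_apply]; exact hsum _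
      rw [this]
      exact M.neg_mem (M.sum_mem fun c' h => hM1 c' (Finset.ne_of_mem_erase h))
    · exact hM1 c hc
  have htop : M = ⊤ := by
    rw [eq_top_iff, ← (Pi.basisFun (ZMod 2) (Fin 6)).span_eq, Submodule.span_le]
    rintro _ ⟨q, rfl⟩
    obtain ⟨X, hX⟩ := hspan q
    have : (Pi.basisFun (ZMod 2) (Fin 6)) q = ∑ c, X c • y' c := by
      funext q'
      rw [Pi.basisFun_apply, Pi.single_apply, ← hX q', Finset.sum_apply]
      simp [y', y, Pi.single_apply, mul_add, Finset.sum_add_distrib]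
    rw [this]
    exact M.sum_mem fun c _ => M.smul_mem _ (hM2 c)
  have h1 : Module.finrank (ZMod 2) M ≤ ((Q.erase cs).image y').card := finrank_span_finset_le_card _
  rw [htop, finrank_top, Module.finrank_fintype_fun_eq_card] at h1
  have h2 := Finset.card_image_le (s := Q.erase cs) (f := y')
  simp at h1
  omega

end EmbHom


namespace EmbHom

lemma k5_or : ∀ p : Fin 10, (kl p = none ∧ ∃ j, kr p = some j) ∨
    ∃ j j', j < j' ∧ kl p = some j ∧ kr p = some j' := by decide

lemma k5_ne : ∀ p : Fin 10, kl p ≠ kr p := by decide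

lemma k5_kr : ∀ p : Fin 10, ∃ j, kr p = some j := by decide

lemma k5_uniq : ∀ p p' : Fin 10, (kl p = kl p' ∧ kr p = kr p') ∨ (kl p = kr p' ∧ kr p = kl p') →
    p = p' := by decide

lemma k5_tri : ∀ q : Fin 6, ∃ a b, ∃ pa pb : Fin 10, kl (Fin.natAdd 4 q) = some a ∧
    kr (Fin.natAdd 4 q) = some b ∧ a ≠ b ∧ kl pa = none ∧ kr pa = some a ∧ kl pb = none ∧
    kr pb = some b ∧ pa.val < 4 ∧ pb.val < 4 := by decide

end EmbHom

namespace EmbHom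

open Classical

noncomputable section

variable {U : Type*} [Fintype U] {H : SimpleGraph U}

/-- Labels of the `i`-th copy of `K₅`. -/
def lab {t : ℕ} (i : Fin t) (o : Option (Fin 4)) : Option (Fin t × Fin 4) := o.map fun j => (i, j)

lemma lab_inj {t : ℕ} (i : Fin t) : Function.Injective (lab i) :=
  Option.map_injective fun _ _ h => (Prod.ext_iff.1 h).2

lemma lab_some {t : ℕ} {i i' : Fin t} {o : Option (Fin 4)} {a : Fin 4} :
    some (i', a) = lab i o ↔ i = i' ∧ o = some a := by
  cases o <;> simp [lab, eq_comm]

/-- Parity of the number of ends of `e` in a set. -/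
def degp (B : Set U) (e : Sym2 U) : ZMod 2 := ∑ u : U, if u ∈ B ∧ u ∈ e then 1 else 0

lemma degp_mk (B : Set U) {a b : U} (h : a ≠ b) :
    degp B s(a, b) = (if a ∈ B then 1 else 0) + (if b ∈ B then 1 else 0) := by
  have : ∀ u : U, (if u ∈ B ∧ u ∈ s(a, b) then (1 : ZMod 2) else 0) =
      (if u = a then (if a ∈ B then 1 else 0) else 0) +
      (if u = b then (if b ∈ B then 1 else 0) else 0) := by
    intro u
    by_cases h1 : u = a
    · subst h1; simp [h]
    · by_cases h2 : u = b
      · subst h2; simp [h1]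
      · simp [h1, h2]
  unfold degp
  rw [Finset.sum_congr rfl fun u _ => this u, Finset.sum_add_distrib]
  simp

lemma sum_degp (B : Set U) (z : H.edgeSet → ZMod 2) (hz : bd1 H z = 0) :
    ∑ e : H.edgeSet, z e * degp B e = 0 := by
  have h1 : ∑ u : U, (if u ∈ B then bd1 H z u else 0) = 0 := by simp [hz]
  rw [← h1]
  simp only [degp, Finset.mul_sum]
  rw [Finset.sum_comm]
  refine Finset.sum_congr rfl fun u _ => ?_
  by_cases hu : u ∈ B
  · simp [hu, bd1_apply]
  · simp [hu]

/-- An embedded graph of Euler genus `g` has no bouquet of `g+1` copies of `K₅`. -/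
theorem no_bouquet (S : EmbScheme H) (g : ℕ) (hg : S.GenusLE g) :
    ¬ ∃ A, IsBouquet H (g + 1) A := by
  rintro ⟨A, hconn, hdisj, hn, hs⟩
  have hE : ∀ (i : Fin (g + 1)) (p : Fin 10), ∃ u ∈ A (lab i (kl p)), ∃ v ∈ A (lab i (kr p)),
      H.Adj u v := by
    intro i p
    rcases k5_or p with ⟨h1, j, h2⟩ | ⟨j, j', hj, h1, h2⟩
    · rw [h1, h2]; exact hn i j
    · rw [h1, h2]; exact hs i j j' hj
  choose u hu v hv huv using hE
  let E : Fin (g + 1) → Fin 10 → H.edgeSet := fun i p => ⟨s(u i p, v i p), huv i p⟩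
  have huniq : ∀ {l l' x}, x ∈ A l → x ∈ A l' → l = l' := by
    intro l l' x h1 h2
    by_contra h
    exact Set.disjoint_left.1 (hdisj l l' h) h1 h2
  let inner : H.edgeSet → Prop := fun e => ∃ l, ∀ x ∈ (e : Sym2 U), x ∈ A l
  have hEin : ∀ i p, ¬ inner (E i p) := by
    rintro i p ⟨l, hl⟩
    have h1 := huniq (hu i p) (hl _ (Sym2.mem_mk_left _ _))
    have h2 := huniq (hv i p) (hl _ (Sym2.mem_mk_right _ _))
    exact k5_ne p (lab_inj i (h1.trans h2.symm))
  have hEinj : ∀ i p i' p', E i p = E i' p' → i = i' ∧ p = p' := by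
    intro i p i' p' h
    have h' : s(u i p, v i p) = s(u i' p', v i' p') := congrArg Subtype.val h
    have hl : (lab i (kl p) = lab i' (kl p') ∧ lab i (kr p) = lab i' (kr p')) ∨
        (lab i (kl p) = lab i' (kr p') ∧ lab i (kr p) = lab i' (kl p')) := by
      rcases Sym2.eq_iff.1 h' with ⟨h1, h2⟩ | ⟨h1, h2⟩
      · exact Or.inl ⟨huniq (hu i p) (h1 ▸ hu i' p'), huniq (hv i p) (h2 ▸ hv i' p')⟩
      · exact Or.inr ⟨huniq (hu i p) (h1 ▸ hv i' p'), huniq (hv i p) (h2 ▸ hu i' p')⟩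
    have hi : i = i' := by
      obtain ⟨j, hj⟩ := k5_kr p
      rw [hj] at hl
      have e : lab i (some j) = some (i, j) := rfl
      rw [e] at hl
      rcases hl with ⟨_, h⟩ | ⟨_, h⟩ <;> exact ((lab_some.1 h).1).symm
    subst hi
    refine ⟨rfl, k5_uniq p p' ?_⟩
    rcases hl with ⟨h1, h2⟩ | ⟨h1, h2⟩
    · exact Or.inl ⟨lab_inj i h1, lab_inj i h2⟩
    · exact Or.inr ⟨lab_inj i h1, lab_inj i h2⟩
  let K : H.edgeSet → Prop := fun e => inner e ∨ ∃ i p, e = E i p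
  -- claim 1
  have hlift : ∀ (i : Fin (g + 1)) (q : Fin 6), ∃ z : H.edgeSet → ZMod 2, bd1 H z = 0 ∧
      (∀ e, ¬ K e → z e = 0) ∧ (∀ q', z (E i (Fin.natAdd 4 q')) = if q' = q then 1 else 0) ∧
      (∀ i' p, i' ≠ i → z (E i' p) = 0) := by
    intro i q
    obtain ⟨a, b, pa, pb, h1, h2, hab, h3, h4, h5, h6, h7', h8'⟩ := k5_tri q
    have h7 : ∀ q' : Fin 6, Fin.natAdd 4 q' ≠ pa := by
      rintro q' rfl; simp at h7'
    have h8 : ∀ q' : Fin 6, Fin.natAdd 4 q' ≠ pb := by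
      rintro q' rfl; simp at h8'
    have hua := hu i pa
    have hva := hv i pa
    have hub := hu i pb
    have hvb := hv i pb
    have huq := hu i (Fin.natAdd 4 q)
    have hvq := hv i (Fin.natAdd 4 q)
    rw [h3] at hua; rw [h4] at hva; rw [h5] at hub; rw [h6] at hvb; rw [h1] at huq; rw [h2] at hvq
    obtain ⟨c1, hc1, hb1⟩ := chain_of_conn hua ((hconn _).2 _ hua _ hub)
    obtain ⟨c2, hc2, hb2⟩ := chain_of_conn hva ((hconn _).2 _ hva _ huq)
    obtain ⟨c3, hc3, hb3⟩ := chain_of_conn hvb ((hconn _).2 _ hvb _ hvq)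
    have n1 : ∀ e, ¬ inner e → c1 e = 0 := fun e he => by
      by_contra h; exact he ⟨_, hc1 e h⟩
    have n2 : ∀ e, ¬ inner e → c2 e = 0 := fun e he => by
      by_contra h; exact he ⟨_, hc2 e h⟩
    have n3 : ∀ e, ¬ inner e → c3 e = 0 := fun e he => by
      by_contra h; exact he ⟨_, hc3 e h⟩
    refine ⟨c1 + c2 + c3 + Pi.single (E i pa) 1 + Pi.single (E i pb) 1 +
      Pi.single (E i (Fin.natAdd 4 q)) 1, ?_, ?_, ?_, ?_⟩
    · simp only [map_add, hb1, hb2, hb3, E, bd1_single]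
      funext x
      simp only [Pi.add_apply, Pi.zero_apply]
      linear_combination z2 ((Pi.single (u i pa) 1 : U → ZMod 2) x) +
        z2 ((Pi.single (u i pb) 1 : U → ZMod 2) x) + z2 ((Pi.single (v i pa) 1 : U → ZMod 2) x) +
        z2 ((Pi.single (v i pb) 1 : U → ZMod 2) x) +
        z2 ((Pi.single (u i (Fin.natAdd 4 q)) 1 : U → ZMod 2) x) +
        z2 ((Pi.single (v i (Fin.natAdd 4 q)) 1 : U → ZMod 2) x)
    · intro e he
      have hi : ¬ inner e := fun h => he (Or.inl h)
      have hne : ∀ p, e ≠ E i p := fun p h => he (Or.inr ⟨i, p, h⟩)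
      simp [n1 e hi, n2 e hi, n3 e hi, Pi.single_apply, hne]
    · intro q'
      have hi := hEin i (Fin.natAdd 4 q')
      have e1 : E i (Fin.natAdd 4 q') ≠ E i pa := fun h => h7 q' (hEinj _ _ _ _ h).2
      have e2 : E i (Fin.natAdd 4 q') ≠ E i pb := fun h => h8 q' (hEinj _ _ _ _ h).2
      have e3 : E i (Fin.natAdd 4 q') = E i (Fin.natAdd 4 q) ↔ q' = q :=
        ⟨fun h => Fin.natAdd_injective _ _ (hEinj _ _ _ _ h).2, fun h => by rw [h]⟩
      simp only [Pi.add_apply, n1 _ hi, n2 _ hi, n3 _ hi, Pi.single_apply, e1, e2, e3]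
      simp
    · intro i' p hii
      have hi := hEin i' p
      have hne : ∀ p', E i' p ≠ E i p' := fun p' h => hii (hEinj _ _ _ _ h).1
      simp [n1 _ hi, n2 _ hi, n3 _ hi, Pi.single_apply, hne]
  -- claim 2
  have hbad : ∀ i : Fin (g + 1), ∃ q : Fin 6, ¬ ∃ X, (∀ e, ¬ K e → bd2 S X e = 0) ∧
      ∀ q', bd2 S X (E i (Fin.natAdd 4 q')) = if q' = q then 1 else 0 := by
    intro i
    by_contra hcon
    push Not at hcon
    let r : Face S → Face S → Prop := fun f f' => ∃ e, ¬ K e ∧ f = fc S (dartOf e) false ∧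
      f' = fc S (dartOf e) true
    have hfin : Finite (Quot r) := Quot.finite _
    have : Fintype (Quot r) := Fintype.ofFinite _
    refine k5_dual (C := Quot r) (fun p => Quot.mk r (fc S (dartOf (E i p)) false))
      (fun p => Quot.mk r (fc S (dartOf (E i p)) true)) ?_ ?_
    · intro X a
      let X' : (Face S ⊕ Iso H) → ZMod 2 := Sum.elim (fun f => X (Quot.mk r f)) 0
      have hX' : ∀ e, bd2 S X' e = X (Quot.mk r (fc S (dartOf e) false)) +
        X (Quot.mk r (fc S (dartOf e) true)) := fun e => rfl
      have hoff : ∀ e, ¬ K e → bd2 S X' e = 0 := by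
        intro e he
        rw [hX', show Quot.mk r (fc S (dartOf e) false) = Quot.mk r (fc S (dartOf e) true) from
          Quot.sound ⟨e, he, rfl, rfl⟩]
        exact z2 _
      have hsum := sum_degp (A (some (i, a))) _ (bd1_bd2 S X')
      refine Eq.trans ?_ hsum
      have hdE : ∀ i' p, degp (A (some (i, a))) (E i' p : Sym2 U) =
          (if i' = i ∧ (kl p = some a ∨ kr p = some a) then 1 else 0) := by
        intro i' p
        rw [degp_mk _ (huv i' p).ne]
        have m1 : u i' p ∈ A (some (i, a)) ↔ i' = i ∧ kl p = some a := by
          rw [← lab_some]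
          exact ⟨fun h => huniq h (hu i' p), fun h => h ▸ hu i' p⟩
        have m2 : v i' p ∈ A (some (i, a)) ↔ i' = i ∧ kr p = some a := by
          rw [← lab_some]
          exact ⟨fun h => huniq h (hv i' p), fun h => h ▸ hv i' p⟩
        have := k5_ne p
        simp only [m1, m2]
        by_cases c1 : i' = i <;> by_cases c2 : kl p = some a <;> by_cases c3 : kr p = some a <;>
          simp [c1, c2, c3]
        exact this (c2.trans c3.symm)
      refine Finset.sum_of_injOn (E i) (fun p _ p' _ h => (hEinj _ _ _ _ h).2) (by simp) ?_ ?_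
      · intro e _ he
        by_cases hK : K e
        · rcases hK with ⟨l, hl⟩ | ⟨i', p, rfl⟩
          · have : degp (A (some (i, a))) (e : Sym2 U) = 0 := by
              obtain ⟨e, hee⟩ := e
              induction e with
              | h x y =>
                rw [degp_mk _ (show H.Adj x y from hee).ne]
                have hx := hl x (Sym2.mem_mk_left _ _)
                have hy := hl y (Sym2.mem_mk_right _ _)
                by_cases hll : l = some (i, a)
                · subst hll; simp [hx, hy]; exact z2 1
                · have k1 : x ∉ A (some (i, a)) := fun h => hll (huniq hx h)
                  have k2 : y ∉ A (some (i, a)) := fun h => hll (huniq hy h)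
                  simp [k1, k2]
            rw [this, mul_zero]
          · by_cases hii : i' = i
            · subst hii; simp at he
            · rw [hdE]; simp [hii]
        · rw [hoff e hK, zero_mul]
      · intro p _
        rw [hdE, hX']
        simp
    · intro q
      obtain ⟨X, hX1, hX2⟩ := hcon q
      refine ⟨Quot.lift (fun f => X (Sum.inl f)) ?_, ?_⟩
      · rintro f f' ⟨e, he, rfl, rfl⟩
        have : X (Sum.inl (fc S (dartOf e) false)) + X (Sum.inl (fc S (dartOf e) true)) = 0 :=
          hX1 e he
        exact CharTwo.add_eq_zero.1 this
      · intro q'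
        rw [← hX2 q']
        rfl
  choose q hq using hbad
  choose z hz0 hzK hz1 hz2 using fun i => hlift i (q i)
  obtain ⟨c, ⟨i, hi⟩, X, hX⟩ := homology S g hg z hz0
  have hci : c i = 1 := by
    have : ∀ x : ZMod 2, x ≠ 0 → x = 1 := by decide
    exact this _ hi
  refine hq i ⟨X, ?_, ?_⟩
  · intro e he
    rw [hX, Finset.sum_apply]
    refine Finset.sum_eq_zero fun j _ => ?_
    simp [hzK j e he]
  · intro q'
    rw [hX, Finset.sum_apply, Finset.sum_eq_single i]
    · simp [hci, hz1]
    · intro j _ hj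
      simp [hz2 j i _ hj.symm]
    · simp

end

end EmbHom


/-! ## Induced paths -/

namespace IndP

variable {V : Type*}

/-- `f 0, …, f (m-1)` is an induced path. -/
def IsIndPath (G : SimpleGraph V) (f : ℕ → V) (m : ℕ) : Prop :=
  (∀ i < m, ∀ j < m, f i = f j → i = j) ∧
    ∀ i < m, ∀ j < m, (G.Adj (f i) (f j) ↔ i + 1 = j ∨ j + 1 = i)

/-- All induced paths inside `S` have order at most `l`. -/
def BddInd (G : SimpleGraph V) (S : Set V) (l : ℕ) : Prop :=
  ∀ f m, IsIndPath G f m → (∀ i < m, f i ∈ S) → m ≤ l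

lemma BddInd.mono {G : SimpleGraph V} {S S' : Set V} {l : ℕ} (h : BddInd G S l) (hs : S' ⊆ S) :
    BddInd G S' l := fun f m hf hm => h f m hf fun i hi => hs (hm i hi)

lemma isIndPath_of_lt {G : SimpleGraph V} {f : ℕ → V} {m : ℕ}
    (h : ∀ i j, i < j → j < m → f i ≠ f j ∧ (G.Adj (f i) (f j) ↔ i + 1 = j)) :
    IsIndPath G f m := by
  constructor
  · intro i hi j hj hij
    rcases lt_trichotomy i j with hl | hl | hl
    · exact absurd hij (h i j hl hj).1
    · exact hl
    · exact absurd hij.symm (h j i hl hi).1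
  · intro i hi j hj
    rcases lt_trichotomy i j with hl | hl | hl
    · rw [(h i j hl hj).2]; omega
    · subst hl; simp
    · rw [G.adj_comm, (h j i hl hi).2]; omega

lemma geo (G : SimpleGraph V) (S : Set V) {u v : V} (hu : u ∈ S)
    (h : Relation.ReflTransGen (fun a b => G.Adj a b ∧ b ∈ S) u v) :
    ∃ f m, IsIndPath G f (m + 1) ∧ f 0 = u ∧ f m = v ∧ ∀ i < m + 1, f i ∈ S := by
  classical
  let P : ℕ → Prop := fun m => ∃ f : ℕ → V, f 0 = u ∧ f m = v ∧ (∀ i ≤ m, f i ∈ S) ∧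
    ∀ i < m, G.Adj (f i) (f (i + 1))
  have hP : ∃ m, P m := by
    induction h with
    | refl => exact ⟨0, fun _ => u, rfl, rfl, fun _ _ => hu, by simp⟩
    | @tail b c _ hc ih =>
      obtain ⟨m, f, h0, hm, hS, hadj⟩ := ih
      refine ⟨m + 1, fun i => if i ≤ m then f i else c, by simpa using h0, by simp, ?_, ?_⟩
      · intro i _
        by_cases h : i ≤ m
        · simpa [h] using hS i h
        · simpa [h] using hc.2
      · intro i hi
        by_cases h : i < m
        · simpa [h.le, Nat.succ_le_of_lt h] using hadj i h
        · have : i = m := by omega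
          subst this
          simpa [hm] using hc.1
  set m := Nat.find hP with hmdef
  obtain ⟨f, h0, hm, hS, hadj⟩ : P m := Nat.find_spec hP
  have hmin : ∀ m' < m, ¬ P m' := fun m' h' => Nat.find_min hP h'
  refine ⟨f, m, isIndPath_of_lt ?_, h0, hm, fun i hi => hS i (by omega)⟩
  intro i j hij hj
  have hadj2 : G.Adj (f i) (f j) → i + 1 = j := by
    intro hA
    by_contra hne
    refine hmin (m - (j - i - 1)) (by omega)
      ⟨fun t => if t ≤ i then f t else f (t + (j - i - 1)), by simpa using h0, ?_, ?_, ?_⟩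
    · have h1 : ¬ (m - (j - i - 1) ≤ i) := by omega
      have h2 : m - (j - i - 1) + (j - i - 1) = m := by omega
      simp only [h1, if_false, h2, hm]
    · intro t ht
      by_cases h : t ≤ i
      · simpa [h] using hS t (by omega)
      · simpa [h] using hS _ (by omega)
    · intro t ht
      by_cases h : t < i
      · simpa [h.le, Nat.succ_le_of_lt h] using hadj t (by omega)
      · by_cases h' : t = i
        · subst h'
          have : t + 1 + (j - t - 1) = j := by omega
          simpa [this] using hA
        · have e1 : ¬ t ≤ i := by omega
          have e2 : ¬ t + 1 ≤ i := by omega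
          have := hadj (t + (j - i - 1)) (by omega)
          simp only [e1, e2, if_false]
          rwa [show t + 1 + (j - i - 1) = t + (j - i - 1) + 1 by omega]
  refine ⟨?_, hadj2, ?_⟩
  · intro heq
    refine hmin (m - (j - i)) (by omega)
      ⟨fun t => if t ≤ i then f t else f (t + (j - i)), by simpa using h0, ?_, ?_, ?_⟩
    · by_cases h1 : m - (j - i) ≤ i
      · have h2 : m - (j - i) = i := by omega
        have h3 : j = m := by omega
        simp only [h2, le_refl, if_true]
        rw [heq, h3, hm]
      · have h2 : m - (j - i) + (j - i) = m := by omega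
        simp only [h1, if_false, h2, hm]
    · intro t ht
      by_cases h : t ≤ i
      · simpa [h] using hS t (by omega)
      · simpa [h] using hS _ (by omega)
    · intro t ht
      by_cases h : t < i
      · simpa [h.le, Nat.succ_le_of_lt h] using hadj t (by omega)
      · by_cases h' : t = i
        · subst h'
          have e1 : t + 1 + (j - t) = j + 1 := by omega
          have := hadj j (by omega)
          simpa [e1, heq] using this
        · have e1 : ¬ t ≤ i := by omega
          have e2 : ¬ t + 1 ≤ i := by omega
          have := hadj (t + (j - i)) (by omega)
          simp only [e1, e2, if_false]
          rwa [show t + 1 + (j - i) = t + (j - i) + 1 by omega]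
  · rintro rfl
    exact hadj i (by omega)

lemma geo_far {G : SimpleGraph V} {S : Set V} {u v : V} {l : ℕ} (hu : u ∈ S)
    (h : Relation.ReflTransGen (fun a b => G.Adj a b ∧ b ∈ S) u v) (hb : BddInd G S l)
    (φ : V → ℕ) (hφ : ∀ a ∈ S, ∀ b ∈ S, G.Adj a b → φ b ≤ φ a + 1) : φ v + 1 ≤ φ u + l := by
  obtain ⟨f, m, hf, h0, hm, hS⟩ := geo G S hu h
  have h1 : ∀ i ≤ m, φ (f i) ≤ φ u + i := by
    intro i
    induction i with
    | zero => intro _; rw [h0]; omega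
    | succ i ih =>
      intro hi
      have := hφ _ (hS i (by omega)) _ (hS (i + 1) (by omega))
        ((hf.2 i (by omega) (i + 1) (by omega)).2 (Or.inl rfl))
      have := ih (by omega)
      omega
  have h2 := h1 m le_rfl
  rw [hm] at h2
  have := hb f (m + 1) hf hS
  omega

lemma concat {G : SimpleGraph V} {g f : ℕ → V} {m0 m : ℕ} (hg : IsIndPath G g (m0 + 1))
    (hf : IsIndPath G f m) (hgf : f 0 = g m0)
    (h : ∀ i < m0, ∀ j < m, 1 ≤ j → g i ≠ f j ∧ ¬ G.Adj (g i) (f j)) :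
    IsIndPath G (fun t => if t < m0 then g t else f (t - m0)) (m0 + m) := by
  refine isIndPath_of_lt ?_
  intro i j hij hj
  by_cases h1 : j < m0
  · have h2 : i < m0 := by omega
    simp only [h1, h2, if_true]
    refine ⟨fun e => by have := hg.1 i (by omega) j (by omega) e; omega, ?_⟩
    rw [hg.2 i (by omega) j (by omega)]; omega
  · by_cases h2 : i < m0
    · simp only [h1, h2, if_true, if_false]
      by_cases h3 : j = m0
      · subst h3
        rw [Nat.sub_self, hgf]
        refine ⟨fun e => by have := hg.1 i (by omega) j (by omega) e; omega, ?_⟩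
        rw [hg.2 i (by omega) j (by omega)]; omega
      · obtain ⟨e1, e2⟩ := h i h2 (j - m0) (by omega) (by omega)
        exact ⟨e1, iff_of_false e2 (by omega)⟩
    · simp only [h1, h2, if_false]
      refine ⟨fun e => by have := hf.1 (i - m0) (by omega) (j - m0) (by omega) e; omega, ?_⟩
      rw [hf.2 (i - m0) (by omega) (j - m0) (by omega)]; omega

lemma conn_Ico {H : SimpleGraph ℕ} {lo hi : ℕ} (hlt : lo < hi)
    (h : ∀ i, lo ≤ i → i + 1 < hi → H.Adj i (i + 1)) : ConnSet H (Set.Ico lo hi) := by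
  have h1 : ∀ n, lo + n < hi → Relation.ReflTransGen
      (fun a b => H.Adj a b ∧ b ∈ Set.Ico lo hi) lo (lo + n) ∧
      Relation.ReflTransGen (fun a b => H.Adj a b ∧ b ∈ Set.Ico lo hi) (lo + n) lo := by
    intro n
    induction n with
    | zero => intro _; exact ⟨.refl, .refl⟩
    | succ n ih =>
      intro hn
      have ha := h (lo + n) (by omega) (by omega)
      obtain ⟨i1, i2⟩ := ih (by omega)
      exact ⟨i1.tail ⟨ha, by constructor <;> omega⟩,
        Relation.ReflTransGen.head ⟨ha.symm, by constructor <;> omega⟩ i2⟩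
  refine ⟨⟨lo, le_rfl, hlt⟩, ?_⟩
  intro u hu v hv
  obtain ⟨a, rfl⟩ := Nat.exists_eq_add_of_le hu.1
  obtain ⟨b, rfl⟩ := Nat.exists_eq_add_of_le hv.1
  exact (h1 a hu.2).2.trans (h1 b hv.2).1

lemma conn_union {I : Type*} {H : SimpleGraph I} {G : SimpleGraph V} {β : I → Set V} {B : Set I}
    (hB : ConnSet H B) (hβ : ∀ i ∈ B, ConnSet G (β i))
    (hadj : ∀ i ∈ B, ∀ j ∈ B, H.Adj i j → ∃ u ∈ β i, ∃ v ∈ β j, G.Adj u v) :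
    ConnSet G (⋃ i ∈ B, β i) := by
  have hsub : ∀ i ∈ B, ∀ u ∈ β i, u ∈ ⋃ i ∈ B, β i := fun i hi u hu => by
    simp only [Set.mem_iUnion]; exact ⟨i, hi, hu⟩
  have hin : ∀ i ∈ B, ∀ u ∈ β i, ∀ v ∈ β i,
      Relation.ReflTransGen (fun a b => G.Adj a b ∧ b ∈ ⋃ i ∈ B, β i) u v := by
    intro i hi u hu v hv
    exact Relation.ReflTransGen.mono (fun a b hab => ⟨hab.1, hsub i hi b hab.2⟩) _ _
      ((hβ i hi).2 u hu v hv)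
  constructor
  · obtain ⟨i, hi⟩ := hB.1
    obtain ⟨u, hu⟩ := (hβ i hi).1
    exact ⟨u, hsub i hi u hu⟩
  · intro u hu v hv
    simp only [Set.mem_iUnion] at hu hv
    obtain ⟨i, hi, hu⟩ := hu
    obtain ⟨j, hj, hv⟩ := hv
    have key : ∀ j, Relation.ReflTransGen (fun a b => H.Adj a b ∧ b ∈ B) i j → j ∈ B ∧ ∀ v ∈ β j,
        Relation.ReflTransGen (fun a b => G.Adj a b ∧ b ∈ ⋃ i ∈ B, β i) u v := by
      intro j hij
      induction hij with
      | refl => exact ⟨hi, fun v hv => hin i hi u hu v hv⟩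
      | @tail b c _ hc ih =>
        refine ⟨hc.2, fun v hv => ?_⟩
        obtain ⟨x, hx, y, hy, hxy⟩ := hadj b ih.1 c hc.2 hc.1
        exact ((ih.2 x hx).tail ⟨hxy, hsub c hc.2 y hy⟩).trans (hin c hc.2 y hy v hv)
    exact (key j (hB.2 i hi j hj)).2 v hv

/-- The quotient graph of a family of blocks. -/
def quot (G : SimpleGraph V) (β : ℕ → Set V) : SimpleGraph ℕ where
  Adj i j := i ≠ j ∧ ∃ u ∈ β i, ∃ v ∈ β j, G.Adj u v
  symm := ⟨fun _ _ ⟨h, u, hu, v, hv, huv⟩ => ⟨h.symm, v, hv, u, hu, huv.symm⟩⟩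
  loopless := ⟨fun _ h => h.1 rfl⟩

lemma lift_bdd {G : SimpleGraph V} {S : Set V} {l d : ℕ} {β : ℕ → Set V} (hb : BddInd G S l)
    (hconn : ∀ i < d, ConnSet G (β i)) (hdisj : ∀ i < d, ∀ j < d, i ≠ j → Disjoint (β i) (β j))
    (hsub : ∀ i < d, β i ⊆ S) : BddInd (quot G β) (Set.Iio d) l := by
  classical
  intro f m hf hm
  rcases Nat.eq_zero_or_pos m with h0 | hpos
  · omega
  have hc : ConnSet G (⋃ i ∈ Set.Ico 0 m, β (f i)) := by
    refine conn_union (H := (quot G β).comap f) (conn_Ico hpos ?_) ?_ ?_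
    · intro i _ hi
      exact (hf.2 i (by omega) (i + 1) hi).2 (Or.inl rfl)
    · intro i hi
      exact hconn _ (hm i hi.2)
    · intro i _ j _ h
      exact h.2
  have hidx : ∀ u, ∃ i, u ∈ (⋃ i ∈ Set.Ico 0 m, β (f i)) → i < m ∧ u ∈ β (f i) := by
    intro u
    by_cases h : u ∈ (⋃ i ∈ Set.Ico 0 m, β (f i))
    · simp only [Set.mem_iUnion] at h
      obtain ⟨i, hi, h⟩ := h
      exact ⟨i, fun _ => ⟨hi.2, h⟩⟩
    · exact ⟨0, fun h' => absurd h' h⟩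
  choose φ hφ using hidx
  have huniq : ∀ u i, i < m → u ∈ β (f i) → φ u = i := by
    intro u i hi hu
    have hu' : u ∈ (⋃ i ∈ Set.Ico 0 m, β (f i)) := by
      simp only [Set.mem_iUnion]; exact ⟨i, ⟨by omega, hi⟩, hu⟩
    obtain ⟨h1, h2⟩ := hφ u hu'
    refine hf.1 _ h1 _ hi ?_
    by_contra hne
    exact Set.disjoint_left.1 (hdisj _ (hm _ h1) _ (hm _ hi) hne) h2 hu
  obtain ⟨u, hu⟩ := (hconn _ (hm 0 hpos)).1
  obtain ⟨v, hv⟩ := (hconn _ (hm (m - 1) (by omega))).1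
  have hu' : u ∈ (⋃ i ∈ Set.Ico 0 m, β (f i)) := by
    simp only [Set.mem_iUnion]; exact ⟨0, ⟨by omega, hpos⟩, hu⟩
  have hv' : v ∈ (⋃ i ∈ Set.Ico 0 m, β (f i)) := by
    simp only [Set.mem_iUnion]; exact ⟨m - 1, ⟨by omega, by omega⟩, hv⟩
  have := geo_far hu' (hc.2 u hu' v hv') (hb.mono (by
    intro x hx
    obtain ⟨h1, h2⟩ := hφ x hx
    exact hsub _ (hm _ h1) h2)) φ (by
    intro a ha b hb hab
    obtain ⟨h1, h2⟩ := hφ a ha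
    obtain ⟨h3, h4⟩ := hφ b hb
    by_cases hne : f (φ a) = f (φ b)
    · have := hf.1 _ h1 _ h3 hne; omega
    · have := (hf.2 _ h1 _ h3).1 ⟨hne, a, h2, b, h4, hab⟩
      omega)
  rw [huniq u 0 hpos hu, huniq v (m - 1) (by omega) hv] at this
  omega

end IndP


namespace IndP

lemma rec_bound (H : SimpleGraph ℕ) : ∀ D x y a b : ℕ, y = x + D → 0 < D →
    (∀ i, x ≤ i → i < y → H.Adj i (i + 1)) →
    (∀ p c q e, x ≤ p → p < c → c < q → q < e → e ≤ y → H.Adj p q → ¬ H.Adj c e) →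
    (∀ f m, IsIndPath H f m → 0 < m → f 0 = x → (∀ i < m, x ≤ f i ∧ f i < y) → m ≤ a) →
    (∀ f m, IsIndPath H f m → 0 < m → f 0 = y → (∀ i < m, x < f i ∧ f i ≤ y) → m ≤ b) →
    D ≤ 2 ^ (a + b) := by
  classical
  intro D
  induction D using Nat.strong_induction_on with
  | _ D ih =>
  intro x y a b hy hD hpath hnc ha hb
  by_cases h1 : D = 1
  · subst h1; exact Nat.one_le_two_pow
  have hsingle : ∀ v : ℕ, IsIndPath H (fun _ => v) 1 := fun v =>
    isIndPath_of_lt (by intro i j h1 h2; exact absurd h2 (by omega))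
  have ha1 : 1 ≤ a := ha _ 1 (hsingle x) one_pos rfl
    (fun i _ => ⟨le_rfl, by show x < y; omega⟩)
  have hb1 : 1 ≤ b := hb _ 1 (hsingle y) one_pos rfl
    (fun i _ => ⟨by show x < y; omega, le_rfl⟩)
  obtain ⟨z, ⟨hxz, hzy, hadjz⟩, hzmax⟩ : ∃ z, (x < z ∧ z < y ∧ H.Adj x z) ∧
      ∀ w, z < w → w < y → ¬ H.Adj x w := by
    let T := (Finset.Ioo x y).filter fun z => H.Adj x z
    have hT : T.Nonempty := ⟨x + 1, by
      simp only [T, Finset.mem_filter, Finset.mem_Ioo]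
      exact ⟨⟨by omega, by omega⟩, hpath x le_rfl (by omega)⟩⟩
    have hmem := T.max'_mem hT
    simp only [T, Finset.mem_filter, Finset.mem_Ioo] at hmem
    refine ⟨T.max' hT, ⟨hmem.1.1, hmem.1.2, hmem.2⟩, ?_⟩
    intro w hw hwy hadj
    have := T.le_max' w (by
      simp only [T, Finset.mem_filter, Finset.mem_Ioo]; exact ⟨⟨lt_trans hmem.1.1 hw, hwy⟩, hadj⟩)
    omega
  -- geodesic from y to z
  have hcon : ConnSet H (Set.Ico z (y + 1)) := conn_Ico (by omega) (fun i h1 h2 =>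
    hpath i (by omega) (by omega))
  obtain ⟨g, m0, hg, hg0, hgm, hgS⟩ := geo H (Set.Ico z (y + 1)) (u := y) (v := z)
    ⟨by omega, by omega⟩ (hcon.2 y ⟨by omega, by omega⟩ z ⟨by omega, by omega⟩)
  have hm0 : 1 ≤ m0 := by
    rcases Nat.eq_zero_or_pos m0 with h | h
    · subst h; omega
    · exact h
  have hI1 : z - x ≤ 2 ^ (a + (b - 1)) := by
    refine ih (z - x) (by omega) x z a (b - 1) (by omega) (by omega)
      (fun i h1 h2 => hpath i h1 (by omega))
      (fun p c q e h1 h2 h3 h4 h5 => hnc p c q e h1 h2 h3 h4 (by omega)) ?_ ?_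
    · intro f m hf hm h0 hr
      exact ha f m hf hm h0 fun i hi => ⟨(hr i hi).1, by have := (hr i hi).2; omega⟩
    · intro f m hf hm h0 hr
      have hfz : ∀ j < m, 1 ≤ j → f j ≠ z := by
        intro j hj h1 he
        have := hf.1 j hj 0 hm (by rw [he, h0])
        omega
      have hgz : ∀ i < m0, z < g i := by
        intro i hi
        have h1 := (hgS i (by omega)).1
        rcases h1.lt_or_eq with h | h
        · exact h
        · have := hg.1 i (by omega) m0 (by omega) (by rw [hgm, ← h])
          omega
      have hc := concat hg hf (by rw [h0, hgm]) (by
        intro i hi j hj hj1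
        have k1 := hgz i hi
        have k2 := hr j hj
        have k3 := hfz j hj hj1
        refine ⟨by omega, fun hA => ?_⟩
        exact hnc x (f j) z (g i) le_rfl k2.1 (by omega) k1
          (by have := (hgS i (by omega)).2; omega) hadjz hA.symm)
      have := hb _ _ hc (by omega) (by
        show (if 0 < m0 then g 0 else f (0 - m0)) = y
        rw [if_pos (by omega), hg0]) (by
        intro i hi
        show x < (if i < m0 then g i else f (i - m0)) ∧ (if i < m0 then g i else f (i - m0)) ≤ y
        split_ifs with h
        · have := hgS i (by omega)
          have h1 := this.1
          have h2 := this.2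
          omega
        · have := hr (i - m0) (by omega)
          omega)
      omega
  have hI2 : y - z ≤ 2 ^ (a - 1 + b) := by
    refine ih (y - z) (by omega) z y (a - 1) b (by omega) (by omega)
      (fun i h1 h2 => hpath i (by omega) h2)
      (fun p c q e h1 h2 h3 h4 h5 => hnc p c q e (by omega) h2 h3 h4 h5) ?_ ?_
    · intro f m hf hm h0 hr
      have hfz : ∀ j < m, 1 ≤ j → f j ≠ z := by
        intro j hj h1 he
        have := hf.1 j hj 0 hm (by rw [he, h0])
        omega
      have hgx : IsIndPath H (fun t => if t = 0 then x else z) (1 + 1) := by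
        refine isIndPath_of_lt ?_
        intro i j hij hj
        have e1 : i = 0 := by omega
        have e2 : j = 1 := by omega
        subst e1 e2
        simp only [if_true, one_ne_zero, if_false]
        exact ⟨by omega, iff_of_true hadjz (by simp)⟩
      have hc := concat hgx hf (by simpa using h0) (by
        intro i hi j hj hj1
        have e1 : i = 0 := by omega
        subst e1
        have k2 := hr j hj
        have k3 := hfz j hj hj1
        simp only [if_true]
        exact ⟨by omega, hzmax _ (by omega) k2.2⟩)
      have := ha _ _ hc (by omega) (by simp) (by
        intro i hi
        by_cases h : i < 1
        · have : i = 0 := by omega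
          subst this
          simp; omega
        · have := hr (i - 1) (by omega)
          simp only [h, if_false]
          omega)
      omega
    · intro f m hf hm h0 hr
      exact hb f m hf hm h0 fun i hi => ⟨by have := (hr i hi).1; omega, (hr i hi).2⟩
  have e1 : a + (b - 1) = a + b - 1 := by omega
  have e2 : a - 1 + b = a + b - 1 := by omega
  rw [e1] at hI1
  rw [e2] at hI2
  have e3 : 2 ^ (a + b) = 2 ^ (a + b - 1) * 2 := by
    rw [← pow_succ]; congr 1; omega
  omega

lemma quad (H : SimpleGraph ℕ) (lo len l : ℕ)
    (hpath : ∀ i, lo ≤ i → i + 1 < lo + len → H.Adj i (i + 1))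
    (hb : BddInd H (Set.Ico lo (lo + len)) l) (hlen : l * 4 ^ l < len) :
    ∃ x p c q e y, lo ≤ x ∧ x ≤ p ∧ p < c ∧ c < q ∧ q < e ∧ e ≤ y ∧ y < lo + len ∧
      H.Adj x y ∧ H.Adj p q ∧ H.Adj c e := by
  by_contra hcon
  push Not at hcon
  have hspan : ∀ x y, lo ≤ x → x < y → y < lo + len → H.Adj x y → y - x ≤ 4 ^ l := by
    intro x y h1 h2 h3 hA
    have := rec_bound H (y - x) x y l l (by omega) (by omega)
      (fun i h4 h5 => hpath i (by omega) (by omega))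
      (fun p c q e h4 h5 h6 h7 h8 h9 => hcon x p c q e y h1 h4 h5 h6 h7 h8 h3 hA h9)
      (fun f m hf _ _ hr => hb f m hf fun i hi => by
        have := hr i hi; constructor <;> omega)
      (fun f m hf _ _ hr => hb f m hf fun i hi => by
        have := hr i hi; constructor <;> omega)
    rwa [← two_mul, pow_mul] at this
  have hL : 0 < 4 ^ l := by positivity
  have hc := conn_Ico (H := H) (lo := lo) (hi := lo + len) (by omega) hpath
  have hlo : lo ∈ Set.Ico lo (lo + len) := ⟨by omega, by omega⟩
  have hhi : lo + len - 1 ∈ Set.Ico lo (lo + len) := ⟨by omega, by omega⟩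
  have := geo_far hlo (hc.2 _ hlo _ hhi) hb (fun u => (u - lo) / 4 ^ l) (by
    intro a ha b hb hab
    have h1 : b - lo ≤ a - lo + 4 ^ l := by
      rcases lt_or_ge a b with h | h
      · have := hspan a b ha.1 h hb.2 hab
        omega
      · omega
    calc (b - lo) / 4 ^ l ≤ (a - lo + 4 ^ l) / 4 ^ l := Nat.div_le_div_right h1
      _ = (a - lo) / 4 ^ l + 1 := Nat.add_div_right _ hL)
  have h2 : l ≤ (lo + len - 1 - lo) / 4 ^ l := by
    rw [Nat.le_div_iff_mul_le hL]
    omega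
  simp at this
  omega

lemma ball_bound (H : SimpleGraph ℕ) (N l Δ : ℕ) (hpath : ∀ i, i + 1 < N → H.Adj i (i + 1))
    (hb : BddInd H (Set.Iio N) l)
    (hdeg : ∀ w < N, Set.ncard {v | v < N ∧ H.Adj w v} ≤ Δ) : N ≤ (Δ + 1) ^ l := by
  classical
  rcases Nat.eq_zero_or_pos N with h0 | hN
  · omega
  let nb : ℕ → Finset ℕ := fun w => (Finset.range N).filter fun v => H.Adj w v
  have hnb : ∀ w < N, (nb w).card ≤ Δ := by
    intro w hw
    have := hdeg w hw
    rwa [show {v | v < N ∧ H.Adj w v} = ((nb w : Finset ℕ) : Set ℕ) by ext; simp [nb],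
      Set.ncard_coe_finset] at this
  let B : ℕ → Finset ℕ := fun r => Nat.rec {0} (fun _ s => s ∪ s.biUnion nb) r
  have hB0 : B 0 = {0} := rfl
  have hBs : ∀ r, B (r + 1) = B r ∪ (B r).biUnion nb := fun r => rfl
  have hBN : ∀ r, ∀ x ∈ B r, x < N := by
    intro r
    induction r with
    | zero => intro x hx; simp [hB0] at hx; omega
    | succ r ih =>
      intro x hx
      rw [hBs, Finset.mem_union, Finset.mem_biUnion] at hx
      rcases hx with hx | ⟨y, _, hx⟩
      · exact ih x hx
      · simp [nb] at hx; exact hx.1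
  have hcard : ∀ r, (B r).card ≤ (Δ + 1) ^ r := by
    intro r
    induction r with
    | zero => simp [hB0]
    | succ r ih =>
      rw [hBs]
      calc (B r ∪ (B r).biUnion nb).card ≤ (B r).card + ((B r).biUnion nb).card :=
            Finset.card_union_le _ _
        _ ≤ (B r).card + (B r).card * Δ :=
            Nat.add_le_add_left (Finset.card_biUnion_le_card_mul _ _ _
              fun x hx => hnb x (hBN r x hx)) _
        _ = (B r).card * (Δ + 1) := by ring
        _ ≤ (Δ + 1) ^ r * (Δ + 1) := Nat.mul_le_mul_right _ ih
        _ = (Δ + 1) ^ (r + 1) := (pow_succ _ _).symm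
  have hmono : ∀ r s, r ≤ s → B r ⊆ B s := by
    intro r s hrs
    induction s, hrs using Nat.le_induction with
    | base => exact Finset.Subset.refl _
    | succ s _ ih => exact ih.trans (by rw [hBs]; exact Finset.subset_union_left)
  have hall : Finset.range N ⊆ B l := by
    intro v hv
    rw [Finset.mem_range] at hv
    have hc := conn_Ico (H := H) (lo := 0) (hi := N) hN (fun i _ h => hpath i h)
    obtain ⟨f, m, hf, hf0, hfm, hS⟩ := geo H (Set.Ico 0 N) (u := 0) (v := v) ⟨le_rfl, hN⟩
      (hc.2 _ ⟨le_rfl, hN⟩ _ ⟨by omega, hv⟩)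
    have hml := hb f (m + 1) hf fun i hi => (hS i hi).2
    have : ∀ i ≤ m, f i ∈ B i := by
      intro i
      induction i with
      | zero => intro _; simp [hB0, hf0]
      | succ i ih =>
        intro hi
        rw [hBs, Finset.mem_union, Finset.mem_biUnion]
        right
        refine ⟨f i, ih (by omega), ?_⟩
        simp only [nb, Finset.mem_filter, Finset.mem_range]
        exact ⟨(hS _ (by omega)).2, (hf.2 i (by omega) (i + 1) (by omega)).2 (Or.inl rfl)⟩
    exact hmono m l (by omega) (hfm ▸ this m le_rfl)
  calc N = (Finset.range N).card := by simp
    _ ≤ (B l).card := Finset.card_le_card hall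
    _ ≤ _ := hcard l

end IndP


namespace IndP

/-- Degree bound used in the core argument. -/
def coreL (l : ℕ) : ℕ := l * 4 ^ l + 1

/-- The core bound. -/
def coreT (g l : ℕ) : ℕ := (2 * ((g + 1) * coreL l + 1) + 1) ^ l

lemma core_fan (H : SimpleGraph ℕ) (N l t : ℕ) (hpath : ∀ i, i + 1 < N → H.Adj i (i + 1))
    (hb : BddInd H (Set.Iio N) l) (w : ℕ) (hw : w < N) (cc : ℕ → ℕ)
    (hcc : ∀ i j, i < j → j ≤ t * coreL l → cc i < cc j)
    (hN : ∀ j ≤ t * coreL l, cc j < N) (hadj : ∀ j ≤ t * coreL l, H.Adj w (cc j))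
    (hside : ∀ i ≤ t * coreL l, ∀ j ≤ t * coreL l, ∀ u, cc i ≤ u → u < cc j → u ≠ w) :
    ∃ A, IsBouquet H t A ∧ ∀ o, A o ⊆ Set.Iio N := by
  set L := coreL l with hL
  set d := t * L with hd
  have hle : ∀ i j, i ≤ j → j ≤ d → cc i ≤ cc j := by
    intro i j h1 h2
    rcases h1.lt_or_eq with h | h
    · exact (hcc i j h h2).le
    · rw [h]
  let β : ℕ → Set ℕ := fun j => Set.Ico (cc j) (cc (j + 1))
  have hbq : BddInd (quot H β) (Set.Iio d) l := by
    refine lift_bdd hb ?_ ?_ ?_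
    · intro i hi
      refine conn_Ico (hcc i (i + 1) (by omega) (by omega)) fun j _ h2 => hpath j ?_
      have := hN (i + 1) (by omega)
      omega
    · intro i hi j hj hij
      rw [Set.disjoint_left]
      rintro u ⟨h1, h2⟩ ⟨h3, h4⟩
      rcases Nat.lt_or_gt_of_ne hij with h | h
      · have := hle (i + 1) j (by omega) (by omega); omega
      · have := hle (j + 1) i (by omega) (by omega); omega
    · intro i hi u hu
      have := hN (i + 1) (by omega)
      exact lt_trans hu.2 this
  have hqpath : ∀ i, i + 1 < d → (quot H β).Adj i (i + 1) := by
    intro i hi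
    have h1 := hcc i (i + 1) (by omega) (by omega)
    have h2 := hcc (i + 1) (i + 2) (by omega) (by omega)
    have h3 := hN (i + 1) (by omega)
    refine ⟨by omega, cc (i + 1) - 1, ⟨by omega, by omega⟩, cc (i + 1), ⟨le_rfl, h2⟩, ?_⟩
    have := hpath (cc (i + 1) - 1) (by omega)
    rwa [show cc (i + 1) - 1 + 1 = cc (i + 1) by omega] at this
  have hquad : ∀ r : Fin t, ∃ x p c q e y, r * L ≤ x ∧ x ≤ p ∧ p < c ∧ c < q ∧ q < e ∧ e ≤ y ∧
      y < r * L + L ∧ (quot H β).Adj x y ∧ (quot H β).Adj p q ∧ (quot H β).Adj c e := by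
    intro r
    have hr : r * L + L ≤ d := by
      rw [hd, ← Nat.succ_mul]; exact Nat.mul_le_mul_right _ r.2
    refine quad (quot H β) (r * L) L l (fun i _ h => hqpath i (by omega)) (hbq.mono ?_) ?_
    · intro i hi
      exact lt_of_lt_of_le hi.2 hr
    · rw [hL, coreL]; omega
  choose x p c q e y h1 h2 h3 h4 h5 h6 h7 a1 a2 a3 using hquad
  have hrd : ∀ r : Fin t, r * L + L ≤ d := by
    intro r
    rw [hd, ← Nat.succ_mul]; exact Nat.mul_le_mul_right _ r.2
  let s : Fin t → ℕ → ℕ := fun r j => match j with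
    | 0 => x r
    | 1 => c r
    | 2 => q r
    | 3 => e r
    | _ => y r + 1
  have s0 : ∀ r, s r 0 = x r := fun _ => rfl
  have s1 : ∀ r, s r 1 = c r := fun _ => rfl
  have s2 : ∀ r, s r 2 = q r := fun _ => rfl
  have s3 : ∀ r, s r 3 = e r := fun _ => rfl
  have s4 : ∀ r, s r 4 = y r + 1 := fun _ => rfl
  have hslt : ∀ r j, j < 4 → s r j < s r (j + 1) := by
    intro r j hj
    have := h1 r; have := h2 r; have := h3 r; have := h4 r; have := h5 r; have := h6 r
    interval_cases j
    · rw [s0, s1]; omega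
    · rw [s1, s2]; omega
    · rw [s2, s3]; omega
    · rw [s3, s4]; omega
  have hsle : ∀ r i j, i ≤ j → j ≤ 4 → s r i ≤ s r j := by
    intro r i j hij
    induction j, hij using Nat.le_induction with
    | base => intro _; exact le_rfl
    | succ j _ ih => intro hj; exact (ih (by omega)).trans (hslt r j (by omega)).le
  have hsd : ∀ r j, j ≤ 4 → s r j ≤ r * L + L := by
    intro r j hj
    refine (hsle r j 4 hj le_rfl).trans ?_
    rw [s4]; have := h7 r; omega
  have hs0 : ∀ r j, j ≤ 4 → r * L ≤ s r j := by
    intro r j hj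
    refine le_trans ?_ (hsle r 0 j (by omega) hj)
    rw [s0]; exact h1 r
  let A : Option (Fin t × Fin 4) → Set ℕ := fun o => match o with
    | none => {w}
    | some (r, j) => Set.Ico (cc (s r j)) (cc (s r (j + 1)))
  have An : A none = {w} := rfl
  have As : ∀ r j, A (some (r, j)) = Set.Ico (cc (s r j)) (cc (s r (j + 1))) := fun _ _ => rfl
  have hsd' : ∀ r j, j ≤ 4 → s r j ≤ d := fun r j hj => (hsd r j hj).trans (hrd r)
  have hblk : ∀ r (j : Fin 4) i, s r j ≤ i → i < s r (j + 1) → β i ⊆ A (some (r, j)) := by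
    intro r j i k1 k2 u hu
    rw [As]
    have hd1 := hsd' r (j + 1) (by omega)
    exact ⟨(hle _ _ k1 (by omega)).trans hu.1, lt_of_lt_of_le hu.2 (hle _ _ k2 hd1)⟩
  have hlink : ∀ r (j j' : Fin 4) i i', s r j ≤ i → i < s r (j + 1) → s r j' ≤ i' →
      i' < s r (j' + 1) → (quot H β).Adj i i' →
      ∃ u ∈ A (some (r, j)), ∃ v ∈ A (some (r, j')), H.Adj u v := by
    intro r j j' i i' k1 k2 k3 k4 hA
    obtain ⟨_, u, hu, v, hv, huv⟩ := hA
    exact ⟨u, hblk r j i k1 k2 hu, v, hblk r j' i' k3 k4 hv, huv⟩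
  refine ⟨A, ⟨?_, ?_, ?_, ?_⟩, ?_⟩
  · rintro (_ | ⟨r, j⟩)
    · rw [An]
      refine ⟨⟨w, rfl⟩, ?_⟩
      rintro u rfl v rfl
      exact .refl
    · rw [As]
      refine conn_Ico (hcc _ _ (hslt r j j.2) (hsd' _ _ (by omega))) fun i _ h => hpath i ?_
      have := hN _ (hsd' r (j + 1) (by omega))
      omega
  · have hws : ∀ r j, w ∉ A (some (r, j)) := by
      intro r j hwA
      rw [As] at hwA
      exact hside _ (hsd' r j (by omega)) _ (hsd' r (j + 1) (by omega)) w hwA.1 hwA.2 rfl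
    have hss : ∀ r (j : Fin 4) r' (j' : Fin 4), s r (j + 1) ≤ s r' j' →
        Disjoint (A (some (r, j))) (A (some (r', j'))) := by
      intro r j r' j' h
      rw [As, As, Set.disjoint_left]
      rintro u ⟨_, k2⟩ ⟨k3, _⟩
      have := hle _ _ h (hsd' r' j' (by omega))
      omega
    have hrr : ∀ (r r' : Fin t), r < r' → (r : ℕ) * L + L ≤ r' * L := by
      intro r r' h
      rw [← Nat.succ_mul]; exact Nat.mul_le_mul_right _ h
    rintro (_ | ⟨r, j⟩) (_ | ⟨r', j'⟩) hne
    · exact absurd rfl hne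
    · rw [An, Set.disjoint_singleton_left]; exact hws _ _
    · rw [An, Set.disjoint_singleton_right]; exact hws _ _
    · rcases lt_trichotomy r r' with h | h | h
      · exact hss _ _ _ _ ((hsd r _ (by omega)).trans ((hrr r r' h).trans (hs0 r' _ (by omega))))
      · subst h
        rcases lt_trichotomy j j' with h | h | h
        · exact hss _ _ _ _ (hsle r _ _ (by omega) (by omega))
        · subst h; exact absurd rfl hne
        · exact (hss _ _ _ _ (hsle r _ _ (by omega) (by omega))).symm
      · exact (hss _ _ _ _
          ((hsd r' _ (by omega)).trans ((hrr r' r h).trans (hs0 r _ (by omega))))).symm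
  · intro r j
    refine ⟨w, rfl, cc (s r j), ?_, hadj _ (hsd' r j (by omega))⟩
    rw [As]
    exact ⟨le_rfl, hcc _ _ (hslt r j j.2) (hsd' _ _ (by omega))⟩
  · intro r j j' hjj
    have := h1 r; have := h2 r; have := h3 r; have := h4 r; have := h5 r; have := h6 r
    have := s0 r; have := s1 r; have := s2 r; have := s3 r; have := s4 r
    have hsucc : ∀ i, s r i ≤ i → True := fun _ _ => trivial
    have cons : ∀ (j j' : Fin 4), (j : ℕ) + 1 = j' →
        ∃ u ∈ A (some (r, j)), ∃ v ∈ A (some (r, j')), H.Adj u v := by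
      intro j j' hj
      have k1 := hslt r j (by omega)
      have k2 := hslt r j' (by omega)
      have k3 := hsd' r (j' + 1) (by omega)
      refine hlink r j j' (s r j' - 1) (s r j') ?_ ?_ le_rfl k2 ?_
      · rw [← hj]; omega
      · rw [← hj]; omega
      · have hj1 := hqpath (s r j' - 1) (by rw [← hj] at k2 k3 ⊢; omega)
        rwa [show s r j' - 1 + 1 = s r j' by rw [← hj]; omega] at hj1
    have hcases : (j : ℕ) + 1 = j' ∨ (j = 0 ∧ j' = 2) ∨ (j = 1 ∧ j' = 3) ∨ (j = 0 ∧ j' = 3) := by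
      revert j j'; decide
    rcases hcases with h | ⟨rfl, rfl⟩ | ⟨rfl, rfl⟩ | ⟨rfl, rfl⟩
    · exact cons j j' h
    · exact hlink r 0 2 (p r) (q r) (by show s r 0 ≤ _; omega) (by show _ < s r 1; omega)
        (by show s r 2 ≤ _; omega) (by show _ < s r 3; omega) (a2 r)
    · exact hlink r 1 3 (c r) (e r) (by show s r 1 ≤ _; omega) (by show _ < s r 2; omega)
        (by show s r 3 ≤ _; omega) (by show _ < s r 4; omega) (a3 r)
    · exact hlink r 0 3 (x r) (y r) (by show s r 0 ≤ _; omega) (by show _ < s r 1; omega)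
        (by show s r 3 ≤ _; omega) (by show _ < s r 4; omega) (a1 r)
  · rintro (_ | ⟨r, j⟩) u hu
    · rw [An] at hu; rw [Set.mem_singleton_iff.1 hu]; exact hw
    · rw [As] at hu
      exact lt_trans hu.2 (hN _ (hsd' r (j + 1) (by omega)))

lemma core (H : SimpleGraph ℕ) (N l g : ℕ) (hpath : ∀ i, i + 1 < N → H.Adj i (i + 1))
    (hb : BddInd H (Set.Iio N) l)
    (hno : ¬ ∃ A, IsBouquet H (g + 1) A ∧ ∀ o, A o ⊆ Set.Iio N) : N ≤ coreT g l := by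
  classical
  set d := (g + 1) * coreL l with hd
  by_cases hdeg : ∀ w < N, Set.ncard {v | v < N ∧ H.Adj w v} ≤ 2 * (d + 1)
  · exact ball_bound H N l _ hpath hb hdeg
  exfalso
  push Not at hdeg
  obtain ⟨w, hw, hcard⟩ := hdeg
  let nbl := (Finset.range N).filter fun v => H.Adj w v ∧ v < w
  let nbr := (Finset.range N).filter fun v => H.Adj w v ∧ w < v
  have hun : {v | v < N ∧ H.Adj w v} = ((nbl ∪ nbr : Finset ℕ) : Set ℕ) := by
    ext v
    simp only [nbl, nbr, Set.mem_setOf_eq, Finset.coe_union, Set.mem_union, Finset.mem_coe,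
      Finset.mem_filter, Finset.mem_range]
    constructor
    · rintro ⟨h1, h2⟩
      rcases lt_trichotomy v w with h | h | h
      · exact Or.inl ⟨h1, h2, h⟩
      · exact absurd h.symm h2.ne
      · exact Or.inr ⟨h1, h2, h⟩
    · rintro (⟨h1, h2, _⟩ | ⟨h1, h2, _⟩) <;> exact ⟨h1, h2⟩
  rw [hun, Set.ncard_coe_finset] at hcard
  have hcu := Finset.card_union_le nbl nbr
  have hex : ∃ T : Finset ℕ, d + 1 ≤ T.card ∧ (∀ v ∈ T, v < N ∧ H.Adj w v) ∧
      ((∀ v ∈ T, v < w) ∨ (∀ v ∈ T, w < v)) := by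
    by_cases h : d + 1 ≤ nbl.card
    · exact ⟨nbl, h, fun v hv => by simp [nbl] at hv; exact ⟨hv.1, hv.2.1⟩,
        Or.inl fun v hv => by simp [nbl] at hv; exact hv.2.2⟩
    · exact ⟨nbr, by omega, fun v hv => by simp [nbr] at hv; exact ⟨hv.1, hv.2.1⟩,
        Or.inr fun v hv => by simp [nbr] at hv; exact hv.2.2⟩
  obtain ⟨T, hT, hTN, hTs⟩ := hex
  let emb := T.orderEmbOfCardLe hT
  have hmem : ∀ i, emb i ∈ T := fun i => T.orderEmbOfCardLe_mem hT i
  let cc : ℕ → ℕ := fun j => emb ⟨min j d, by omega⟩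
  have hccT : ∀ j, cc j ∈ T := fun j => hmem _
  refine hno (core_fan H N l (g + 1) hpath hb w hw cc ?_ ?_ ?_ ?_)
  · intro i j hij hj
    refine emb.strictMono ?_
    show min i d < min j d
    rw [← hd] at hj
    omega
  · intro j _; exact (hTN _ (hccT j)).1
  · intro j _; exact (hTN _ (hccT j)).2
  · intro i _ j _ u h1 h2
    rcases hTs with h | h
    · have := h _ (hccT j); omega
    · have := h _ (hccT i); omega

/-- Transfer of bouquets along a model. -/
lemma bouquet_transfer {I U : Type*} {H : SimpleGraph I} {G : SimpleGraph U} (β : I → Set U)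
    (D : Set I) (t : ℕ)
    (hconn : ∀ i ∈ D, ConnSet G (β i)) (hdisj : ∀ i ∈ D, ∀ j ∈ D, i ≠ j → Disjoint (β i) (β j))
    (hadj : ∀ i ∈ D, ∀ j ∈ D, H.Adj i j → ∃ u ∈ β i, ∃ v ∈ β j, G.Adj u v)
    (h : ∃ A, IsBouquet H t A ∧ ∀ o, A o ⊆ D) : ∃ A, IsBouquet G t A := by
  obtain ⟨A, ⟨h1, h2, h3, h4⟩, hD⟩ := h
  have hmem : ∀ o i u, i ∈ A o → u ∈ β i → u ∈ ⋃ i ∈ A o, β i := by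
    intro o i u hi hu
    simp only [Set.mem_iUnion]; exact ⟨i, hi, hu⟩
  refine ⟨fun o => ⋃ i ∈ A o, β i, ?_, ?_, ?_, ?_⟩
  · intro o
    exact conn_union (h1 o) (fun i hi => hconn i (hD o hi))
      (fun i hi j hj => hadj i (hD o hi) j (hD o hj))
  · intro o o' hne
    rw [Set.disjoint_left]
    intro u hu hu'
    simp only [Set.mem_iUnion] at hu hu'
    obtain ⟨i, hi, hu⟩ := hu
    obtain ⟨j, hj, hu'⟩ := hu'
    have hij : i ≠ j := by
      rintro rfl
      exact Set.disjoint_left.1 (h2 o o' hne) hi hj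
    exact Set.disjoint_left.1 (hdisj i (hD o hi) j (hD o' hj) hij) hu hu'
  · intro i j
    obtain ⟨u, hu, v, hv, huv⟩ := h3 i j
    obtain ⟨x, hx, y, hy, hxy⟩ := hadj u (hD _ hu) v (hD _ hv) huv
    exact ⟨x, hmem _ u x hu hx, y, hmem _ v y hv hy, hxy⟩
  · intro i j j' hj
    obtain ⟨u, hu, v, hv, huv⟩ := h4 i j j' hj
    obtain ⟨x, hx, y, hy, hxy⟩ := hadj u (hD _ hu) v (hD _ hv) huv
    exact ⟨x, hmem _ u x hu hx, y, hmem _ v y hv hy, hxy⟩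

end IndP


namespace IndP

lemma model_bound {U : Type*} [Fintype U] {G0 : SimpleGraph U} (S : EmbScheme G0) (g : ℕ)
    (hg : S.GenusLE g) (H : SimpleGraph ℕ) (N l : ℕ) (hpath : ∀ i, i + 1 < N → H.Adj i (i + 1))
    (hb : BddInd H (Set.Iio N) l) (β : ℕ → Set U) (hconn : ∀ i < N, ConnSet G0 (β i))
    (hdisj : ∀ i < N, ∀ j < N, i ≠ j → Disjoint (β i) (β j))
    (hadj : ∀ i < N, ∀ j < N, H.Adj i j → ∃ u ∈ β i, ∃ v ∈ β j, G0.Adj u v) :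
    N ≤ coreT g l :=
  core H N l g hpath hb fun h => EmbHom.no_bouquet S g hg
    (bouquet_transfer β (Set.Iio N) (g + 1) hconn hdisj hadj h)

lemma conn_image {U : Type*} {G : SimpleGraph U} {f : ℕ → U} {lo hi : ℕ} (hlt : lo < hi)
    (h : ∀ i, lo ≤ i → i + 1 < hi → G.Adj (f i) (f (i + 1))) : ConnSet G (f '' Set.Ico lo hi) := by
  have hc := conn_Ico (H := G.comap f) hlt h
  refine ⟨hc.1.image f, ?_⟩
  rintro _ ⟨u, hu, rfl⟩ _ ⟨v, hv, rfl⟩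
  exact Relation.ReflTransGen.lift f (fun a b hab => ⟨hab.1, b, hab.2, rfl⟩) _ _ (hc.2 u hu v hv)

lemma window (D : Finset ℕ) (d N M : ℕ) (hD : D.card ≤ d) (hM : (d + 1) * N ≤ M) :
    ∃ s, s + N ≤ M ∧ ∀ j, s ≤ j → j < s + N → j ∉ D := by
  by_contra hcon
  push Not at hcon
  have h1 : ∀ r : ℕ, ∃ j, r < d + 1 → r * N ≤ j ∧ j < r * N + N ∧ j ∈ D := by
    intro r
    by_cases hr : r < d + 1
    · have : r * N + N ≤ M := by
        rw [← Nat.succ_mul]; exact (Nat.mul_le_mul_right _ hr).trans hM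
      obtain ⟨j, hj⟩ := hcon (r * N) this
      exact ⟨j, fun _ => hj⟩
    · exact ⟨0, fun h => absurd h hr⟩
  choose f hf using h1
  have := Finset.card_le_card_of_injOn (s := Finset.range (d + 1)) (t := D) f
    (fun r hr => (hf r (by simpa using hr)).2.2) (by
      intro r hr r' hr' he
      have k1 := hf r (by simpa using hr)
      have k2 := hf r' (by simpa using hr')
      rw [← he] at k2
      by_contra hne
      rcases Nat.lt_or_gt_of_ne hne with h | h
      · have := Nat.mul_le_mul_right N (Nat.succ_le_of_lt h)
        rw [Nat.succ_mul] at this; omega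
      · have := Nat.mul_le_mul_right N (Nat.succ_le_of_lt h)
        rw [Nat.succ_mul] at this; omega)
  simp at this
  omega

lemma vred (N' : ℕ) (hN' : 1 ≤ N') : ∀ (k s N : ℕ) (I : ℕ → Set ℕ),
    (∀ u, s ≤ u → u < s + N → u ∈ I u) →
    (∀ u, s ≤ u → u < s + N → ∀ x y z, x ≤ y → y ≤ z → x ∈ I u → z ∈ I u → y ∈ I u) →
    (∀ t, s ≤ t → t < s + N → Set.ncard {u | (s ≤ u ∧ u < s + N) ∧ t ∈ I u} ≤ k) →
    (2 * N') ^ k ≤ N →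
    ∃ c : ℕ → ℕ, (∀ i < N', c i < c (i + 1)) ∧ (∀ i ≤ N', s ≤ c i ∧ c i ≤ s + N) ∧
      ∀ i j u v, i + 2 ≤ j → j < N' → c i ≤ u → u < c (i + 1) → c j ≤ v → v < c (j + 1) →
        Disjoint (I u) (I v) := by
  intro k
  have hfin : ∀ (s N t : ℕ) (I : ℕ → Set ℕ), Set.Finite {u | (s ≤ u ∧ u < s + N) ∧ t ∈ I u} := by
    intro s N t I
    exact (Set.finite_Ico s (s + N)).subset fun u hu => ⟨hu.1.1, hu.1.2⟩
  induction k with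
  | zero =>
    intro s N I hI _ hdep hN
    rw [pow_zero] at hN
    have h1 := hdep s le_rfl (by omega)
    have h2 : s ∈ {u | (s ≤ u ∧ u < s + N) ∧ s ∈ I u} :=
      ⟨⟨le_rfl, by omega⟩, hI s le_rfl (by omega)⟩
    have := (Set.ncard_pos (hfin s N s I)).2 ⟨s, h2⟩
    omega
  | succ k ih =>
    intro s N I hI hconv hdep hN
    set S := (2 * N') ^ k with hS
    have hSpos : 1 ≤ S := Nat.one_le_pow _ _ (by omega)
    rw [pow_succ, ← hS] at hN
    by_cases hshort : ∀ u, s ≤ u → u < s + N → ∀ t, s ≤ t → t < s + N → t ∈ I u →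
        t ≤ u + S ∧ u ≤ t + S
    · have hbd : ∀ i, i ≤ N' → i * (2 * S) ≤ N := by
        intro i hi
        calc i * (2 * S) ≤ N' * (2 * S) := Nat.mul_le_mul_right _ hi
          _ = S * (2 * N') := by ring
          _ ≤ N := hN
      refine ⟨fun i => s + i * (2 * S), ?_, ?_, ?_⟩
      · intro i _
        show s + i * (2 * S) < s + (i + 1) * (2 * S)
        rw [Nat.succ_mul i]; omega
      · intro i hi
        have := hbd i hi
        show s ≤ s + i * (2 * S) ∧ s + i * (2 * S) ≤ s + N
        omega
      · intro i j u v hij hj h1 h2 h3 h4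
        simp only [Nat.succ_mul i, Nat.succ_mul j] at h1 h2 h3 h4
        have k1 : i * (2 * S) + 2 * S + 2 * S ≤ j * (2 * S) := by
          have := Nat.mul_le_mul_right (2 * S) hij
          have e : (i + 2) * (2 * S) = i * (2 * S) + 2 * S + 2 * S := by ring
          omega
        have k2 := hbd (j + 1) (by omega)
        rw [Nat.succ_mul j] at k2
        have hu1 : s ≤ u := by omega
        have hu2 : u < s + N := by omega
        have hv1 : s ≤ v := by omega
        have hv2 : v < s + N := by omega
        have hu3 := hI u hu1 hu2
        have hv3 := hI v hv1 hv2
        rw [Set.disjoint_left]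
        intro x hxu hxv
        have : ∃ t, u ≤ t ∧ t ≤ v ∧ t ∈ I u ∧ t ∈ I v := by
          rcases lt_or_ge x u with h | h
          · exact ⟨u, le_rfl, by omega, hu3, hconv v hv1 hv2 x u v h.le (by omega) hxv hv3⟩
          · rcases lt_or_ge v x with h' | h'
            · exact ⟨v, by omega, le_rfl, hconv u hu1 hu2 u v x (by omega) h'.le hu3 hxu, hv3⟩
            · exact ⟨x, h, h', hxu, hxv⟩
        obtain ⟨t, t1, t2, t3, t4⟩ := this
        have := hshort u hu1 hu2 t (by omega) (by omega) t3
        have := hshort v hv1 hv2 t (by omega) (by omega) t4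
        omega
    · push Not at hshort
      obtain ⟨u, hu1, hu2, t, ht1, ht2, htu, hlong⟩ := hshort
      have hsub : ∃ s', s ≤ s' ∧ s' + S ≤ s + N ∧ ∀ y, s' ≤ y → y < s' + S → y ≠ u ∧ y ∈ I u := by
        have hu3 := hI u hu1 hu2
        by_cases h : t ≤ u + S
        · have := hlong h
          refine ⟨u - S, by omega, by omega, fun y h1 h2 => ⟨by omega, ?_⟩⟩
          exact hconv u hu1 hu2 t y u (by omega) (by omega) htu hu3
        · refine ⟨u + 1, by omega, by omega, fun y h1 h2 => ⟨by omega, ?_⟩⟩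
          exact hconv u hu1 hu2 u y t (by omega) (by omega) hu3 htu
      obtain ⟨s', h1, h2, h3⟩ := hsub
      obtain ⟨c, c1, c2, c3⟩ := ih s' S I (fun v k1 k2 => hI v (by omega) (by omega))
        (fun v k1 k2 => hconv v (by omega) (by omega)) (by
          intro y hy1 hy2
          have hd := hdep y (by omega) (by omega)
          have hlt : Set.ncard {u | (s' ≤ u ∧ u < s' + S) ∧ y ∈ I u} <
              Set.ncard {u | (s ≤ u ∧ u < s + N) ∧ y ∈ I u} := by
            refine Set.ncard_lt_ncard ?_ (hfin s N y I)
            rw [Set.ssubset_iff_of_subset (by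
              rintro v ⟨⟨a1, a2⟩, a3⟩
              exact ⟨⟨by omega, by omega⟩, a3⟩)]
            refine ⟨u, ⟨⟨hu1, hu2⟩, (h3 y hy1 hy2).2⟩, ?_⟩
            rintro ⟨⟨a1, a2⟩, _⟩
            exact (h3 u a1 a2).1 rfl
          omega) le_rfl
      refine ⟨c, c1, fun i hi => ?_, c3⟩
      have := c2 i hi
      omega

lemma ring_convex {M : ℕ} (hM : 3 ≤ M) (P : Set (ZMod M))
    (hP : ((ringGraph M).induce P).Connected) (h0 : (0 : ZMod M) ∉ P) {x y z : ℕ} (hxy : x ≤ y)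
    (hyz : y ≤ z) (hzM : z < M) (hx : (x : ZMod M) ∈ P) (hz : (z : ZMod M) ∈ P) :
    (y : ZMod M) ∈ P := by
  have : NeZero M := ⟨by omega⟩
  by_contra hy
  have hstep : ∀ a b : ZMod M, b = a + 1 → b ≠ 0 → b.val = a.val + 1 := by
    rintro a b rfl hb
    have : Fact (1 < M) := ⟨by omega⟩
    have h1 : (a + 1).val = (a.val + 1) % M := by rw [ZMod.val_add, ZMod.val_one]
    rcases Nat.lt_or_ge (a.val + 1) M with h | h
    · rw [h1, Nat.mod_eq_of_lt h]
    · have h2 := ZMod.val_lt a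
      have h3 : a.val + 1 = M := by omega
      rw [h3, Nat.mod_self] at h1
      exact absurd ((ZMod.val_eq_zero _).1 h1) hb
  have hyval : ((y : ZMod M)).val = y := ZMod.val_cast_of_lt (by omega)
  have hr := hP.preconnected ⟨(x : ZMod M), hx⟩ ⟨(z : ZMod M), hz⟩
  rw [SimpleGraph.reachable_iff_reflTransGen] at hr
  have hne : ∀ a ∈ P, a.val ≠ y := by
    intro a ha h
    apply hy
    rw [← h, ZMod.natCast_zmod_val]; exact ha
  have key : ∀ w : P, Relation.ReflTransGen ((ringGraph M).induce P).Adj ⟨(x : ZMod M), hx⟩ w →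
      (w : ZMod M).val < y := by
    intro w hw
    induction hw with
    | refl =>
      have := hne _ hx
      have h2 : ((x : ZMod M)).val = x := ZMod.val_cast_of_lt (by omega)
      show ((x : ZMod M)).val < y
      omega
    | @tail b c _ hc ih =>
      have hc' : (ringGraph M).Adj (b : ZMod M) (c : ZMod M) := hc
      rw [ringGraph, SimpleGraph.fromRel_adj] at hc'
      have n1 : (b : ZMod M) ≠ 0 := fun h => h0 (h ▸ b.2)
      have n2 : (c : ZMod M) ≠ 0 := fun h => h0 (h ▸ c.2)
      have n3 := hne _ c.2
      rcases hc'.2 with h | h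
      · have := hstep _ _ h n2; omega
      · have := hstep _ _ h n1; omega
  have := key _ hr
  have h2 : ((z : ZMod M)).val = z := ZMod.val_cast_of_lt hzM
  simp only [h2] at this
  omega

end IndP


namespace IndP

/-- Bound on the length of the cycle of a vortex. -/
def vtxM (g k l : ℕ) : ℕ := (k + 1) * (2 * (coreT g l + 1)) ^ k

lemma vortex_bound {V : Type} [Fintype V] {G : SimpleGraph V} {g k l : ℕ}
    (hb : BddInd G Set.univ l) {G₀ Gi : G.Subgraph} (S : EmbScheme G₀.coe) (hS : S.GenusLE g)
    {M : ℕ} (hM : 3 ≤ M) (e : ZMod M → G₀.verts) (he : ∀ x, G₀.coe.Adj (e x) (e (x + 1)))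
    (hinj : Function.Injective e) (hv : IsVortex Gi G₀ e k)
    (hG : ∀ u v : G₀.verts, (u : V) ∈ Gi.verts → (v : V) ∈ Gi.verts → G.Adj u v →
      G₀.Adj u v ∨ Gi.Adj u v) : M ≤ vtxM g k l := by
  classical
  have : Fintype G₀.verts := Fintype.ofFinite _
  have : NeZero M := ⟨by omega⟩
  obtain ⟨hverts, model, hmc, hme, hma, hmw⟩ := hv
  by_contra hcon
  set N' := coreT g l + 1 with hN'
  set N := (2 * N') ^ k with hN
  have hMN : (k + 1) * N ≤ M := by
    unfold vtxM at hcon; rw [← hN', ← hN] at hcon; omega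
  have hqv : ∀ x, (e x : V) ∈ Gi.verts := by
    intro x
    have : (e x : V) ∈ Gi.verts ∩ G₀.verts := by rw [hverts]; exact ⟨e x, ⟨x, rfl⟩, rfl⟩
    exact this.1
  let q : ℕ → G₀.verts := fun j => e (j : ZMod M)
  have hqinj : ∀ i < M, ∀ j < M, q i = q j → i = j := by
    intro i hi j hj h
    have h1 := congrArg ZMod.val (hinj h)
    rwa [ZMod.val_cast_of_lt hi, ZMod.val_cast_of_lt hj] at h1
  have hqadj : ∀ j, G₀.coe.Adj (q j) (q (j + 1)) := by
    intro j
    have := he (j : ZMod M)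
    simpa [q] using this
  let mo : ℕ → Set (ZMod M) := fun j => model ⟨(q j : V), hqv _⟩
  let I : ℕ → Set ℕ := fun j => {t | t < M ∧ (t : ZMod M) ∈ mo j}
  have hdep : ∀ t : ZMod M, Set.ncard {j : ℕ | j < M ∧ t ∈ mo j} ≤ k := by
    intro t
    refine le_trans ?_ (hmw t)
    refine Set.ncard_le_ncard_of_injOn (fun j => (⟨(q j : V), hqv _⟩ : Gi.verts)) ?_ ?_
      (Set.toFinite _)
    · rintro j ⟨_, hj⟩; exact hj
    · rintro i ⟨hi, _⟩ j ⟨hj, _⟩ h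
      exact hqinj i hi j hj (Subtype.ext (congrArg (fun x : Gi.verts => (x : V)) h))
  have hself : ∀ j, (j : ZMod M) ∈ mo j := fun j => hme _ _ rfl
  have hfin : ∀ t : ZMod M, Set.Finite {j : ℕ | j < M ∧ t ∈ mo j} := fun t =>
    (Set.finite_Iio M).subset fun j hj => hj.1
  obtain ⟨s, hs1, hs2⟩ := window (hfin 0).toFinset k N M (by
    rw [← Set.ncard_eq_toFinset_card _ (hfin 0)]; exact hdep 0) hMN
  have hz : ∀ j, s ≤ j → j < s + N → (0 : ZMod M) ∉ mo j := by
    intro j h1 h2 h3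
    refine hs2 j h1 h2 ?_
    rw [Set.Finite.mem_toFinset]
    exact ⟨by omega, h3⟩
  obtain ⟨c, hc1, hc2, hc3⟩ := vred N' (by omega) k s N I
    (fun u h1 h2 => ⟨by omega, hself u⟩)
    (by
      intro u h1 h2 x y z hxy hyz hx hzz
      exact ⟨lt_of_le_of_lt hyz hzz.1,
        ring_convex hM (mo u) (hmc _) (hz u h1 h2) hxy hyz hzz.1 hx.2 hzz.2⟩)
    (by
      intro t h1 h2
      refine le_trans (Set.ncard_le_ncard ?_ (hfin (t : ZMod M))) (hdep (t : ZMod M))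
      rintro u ⟨⟨a1, a2⟩, a3⟩
      exact ⟨by omega, a3.2⟩) le_rfl
  have hcM : ∀ i ≤ N', c i ≤ M := fun i hi => (hc2 i hi).2.trans hs1
  have hcle : ∀ i j, i ≤ j → j ≤ N' → c i ≤ c j := by
    intro i j hij
    induction j, hij using Nat.le_induction with
    | base => intro _; exact le_rfl
    | succ j _ ih => intro hj; exact (ih (by omega)).trans (hc1 j (by omega)).le
  let β0 : ℕ → Set G₀.verts := fun i => q '' Set.Ico (c i) (c (i + 1))
  let β : ℕ → Set V := fun i => (fun j => (q j : V)) '' Set.Ico (c i) (c (i + 1))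
  have hdisj0 : ∀ i < N', ∀ j < N', i ≠ j → ∀ u v, u ∈ Set.Ico (c i) (c (i + 1)) →
      v ∈ Set.Ico (c j) (c (j + 1)) → q u ≠ q v := by
    intro i hi j hj hij u v hu hv h
    have k1 := hcM (i + 1) (by omega)
    have k2 := hcM (j + 1) (by omega)
    have := hqinj u (lt_of_lt_of_le hu.2 k1) v (lt_of_lt_of_le hv.2 k2) h
    subst this
    have a1 := hu.1; have a2 := hu.2; have a3 := hv.1; have a4 := hv.2
    rcases Nat.lt_or_gt_of_ne hij with h | h
    · have := hcle (i + 1) j (by omega) (by omega); omega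
    · have := hcle (j + 1) i (by omega) (by omega); omega
  have hbq : BddInd (quot G β) (Set.Iio N') l := by
    refine lift_bdd hb ?_ ?_ fun i _ => Set.subset_univ _
    · intro i hi
      exact conn_image (hc1 i hi) fun j _ _ => (hqadj j).adj_sub
    · intro i hi j hj hij
      rw [Set.disjoint_left]
      rintro _ ⟨u, hu, rfl⟩ ⟨v, hv, h⟩
      exact hdisj0 i hi j hj hij u v hu hv (Subtype.ext h.symm)
  have hcons : ∀ i, i + 1 < N' → ∃ u ∈ Set.Ico (c i) (c (i + 1)),
      u + 1 ∈ Set.Ico (c (i + 1)) (c (i + 1 + 1)) := by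
    intro i hi
    have k1 := hc1 i (by omega)
    have k2 := hc1 (i + 1) (by omega)
    exact ⟨c (i + 1) - 1, ⟨by omega, by omega⟩, by omega, by omega⟩
  have hfar : ∀ i j, i + 2 ≤ j → j < N' → ∀ u ∈ Set.Ico (c i) (c (i + 1)),
      ∀ v ∈ Set.Ico (c j) (c (j + 1)), G.Adj (q u) (q v) → G₀.coe.Adj (q u) (q v) := by
    intro i j hij hj u hu v hv huv
    rcases hG _ _ (hqv _) (hqv _) huv with h | h
    · exact h
    · exfalso
      have hd := hc3 i j u v hij hj hu.1 hu.2 hv.1 hv.2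
      obtain ⟨t, ht1, ht2⟩ := hma (u := ⟨(q u : V), hqv _⟩) (v := ⟨(q v : V), hqv _⟩) h
      have hd2 := Set.disjoint_left.1 hd
      refine @hd2 t.val ?_ ?_
      · exact ⟨ZMod.val_lt t, by rw [ZMod.natCast_zmod_val]; exact ht1⟩
      · exact ⟨ZMod.val_lt t, by rw [ZMod.natCast_zmod_val]; exact ht2⟩
  have hreal : ∀ i < N', ∀ j < N', i < j → (quot G β).Adj i j →
      ∃ u ∈ β0 i, ∃ v ∈ β0 j, G₀.coe.Adj u v := by
    intro i hi j hj hij hA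
    by_cases h : i + 1 = j
    · subst h
      obtain ⟨u, hu, hu'⟩ := hcons i hj
      exact ⟨q u, ⟨u, hu, rfl⟩, q (u + 1), ⟨u + 1, hu', rfl⟩, hqadj u⟩
    · obtain ⟨_, _, ⟨u, hu, rfl⟩, _, ⟨v, hv, rfl⟩, huv⟩ := hA
      exact ⟨q u, ⟨u, hu, rfl⟩, q v, ⟨v, hv, rfl⟩, hfar i j (by omega) hj u hu v hv huv⟩
  have := model_bound S g hS (quot G β) N' l (by
      intro i hi
      obtain ⟨u, hu, hu'⟩ := hcons i hi
      exact ⟨by omega, _, ⟨u, hu, rfl⟩, _, ⟨u + 1, hu', rfl⟩, (hqadj u).adj_sub⟩) hbq β0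
    (fun i hi => conn_image (hc1 i hi) fun j _ _ => hqadj j)
    (by
      intro i hi j hj hij
      rw [Set.disjoint_left]
      rintro _ ⟨u, hu, rfl⟩ ⟨v, hv, h⟩
      exact hdisj0 i hi j hj hij u v hu hv h.symm)
    (by
      intro i hi j hj hA
      rcases Nat.lt_or_gt_of_ne hA.1 with h | h
      · exact hreal i hi j hj h hA
      · obtain ⟨u, hu, v, hv, huv⟩ := hreal j hj i hi h hA.symm
        exact ⟨v, hv, u, hu, huv.symm⟩)
  omega

lemma vortex_card {V : Type} [Fintype V] {G : SimpleGraph V} {k : ℕ}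
    {G₀ Gi : G.Subgraph} {M : ℕ} (hM : 3 ≤ M) (e : ZMod M → G₀.verts)
    (hv : IsVortex Gi G₀ e k) : Gi.verts.ncard ≤ M * k := by
  classical
  have : NeZero M := ⟨by omega⟩
  obtain ⟨_, model, hmc, _, _, hmw⟩ := hv
  have h1 : (Set.univ : Set Gi.verts) ⊆ ⋃ t : ZMod M, {v | t ∈ model v} := by
    intro v _
    obtain ⟨t⟩ := (hmc v).nonempty
    exact Set.mem_iUnion.2 ⟨t.1, t.2⟩
  have h2 := Set.ncard_le_ncard h1 (Set.toFinite _)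
  rw [Set.ncard_univ] at h2
  have h3 : (⋃ t : ZMod M, {v : Gi.verts | t ∈ model v}).ncard ≤
      ∑ t : ZMod M, {v : Gi.verts | t ∈ model v}.ncard := by
    exact Set.ncard_iUnion_le_of_fintype _
  calc Gi.verts.ncard ≤ _ := h2
    _ ≤ _ := h3
    _ ≤ ∑ t : ZMod M, k := Finset.sum_le_sum fun t _ => hmw t
    _ = M * k := by simp [ZMod.card]

/-- Bound on the number of exceptional vertices. -/
def excB (g p a k l : ℕ) : ℕ := a + p * (vtxM g k l * k)

lemma order_bound {V : Type} [Fintype V] {G : SimpleGraph V} {g p a k l : ℕ}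
    (hG : AlmostEmbeddable G g p a k) (hH : HasHamPath G) (hb : BddInd G Set.univ l) :
    Fintype.card V < (excB g p a k l + 1) * (coreT g l + 1) := by
  classical
  obtain ⟨A, hA, s, hs, G₀, Gv, hsup, hdisj, S, hS, m, e, hadj, hm, hinj, _, _, hv⟩ := hG
  obtain ⟨u0, v0, P, hP, hPall⟩ := hH
  by_contra hcon
  push Not at hcon
  have : Fintype G₀.verts := Fintype.ofFinite _
  have hvert : ∀ v, v ∉ A ↔ v ∈ G₀.verts ∨ ∃ i, v ∈ (Gv i).verts := by
    intro v
    have := congrArg (fun X : G.Subgraph => v ∈ X.verts) hsup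
    simp at this
    rw [← this]
  have hedge : ∀ u v, u ∉ A → v ∉ A → G.Adj u v → G₀.Adj u v ∨ ∃ i, (Gv i).Adj u v := by
    intro u v hu hv huv
    have := congrArg (fun X : G.Subgraph => X.Adj u v) hsup
    simp [hu, hv, huv] at this
    exact this
  have hMb : ∀ i, m i ≤ vtxM g k l := by
    intro i
    refine vortex_bound hb S hS (hm i) (e i) (hadj i) (hinj i) (hv i) ?_
    intro u v hu hv' huv
    rcases hedge u v ((hvert _).2 (Or.inl u.2)) ((hvert _).2 (Or.inl v.2)) huv with h | ⟨j, h⟩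
    · exact Or.inl h
    · by_cases hij : i = j
      · subst hij; exact Or.inr h
      · exact absurd ((Gv j).edge_vert h) (Set.disjoint_left.1 (hdisj i j hij) hu)
  let X : Set V := A ∪ ⋃ i, (Gv i).verts
  have hX : X.ncard ≤ excB g p a k l := by
    refine (Set.ncard_union_le _ _).trans (Nat.add_le_add hA ?_)
    have h3 : (⋃ i, (Gv i).verts).ncard ≤ ∑ i, (Gv i).verts.ncard := by
      exact Set.ncard_iUnion_le_of_fintype _
    refine h3.trans ?_
    calc ∑ i, (Gv i).verts.ncard ≤ ∑ i : Fin s, vtxM g k l * k := Finset.sum_le_sum fun i _ =>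
          (vortex_card (hm i) (e i) (hv i)).trans (Nat.mul_le_mul_right _ (hMb i))
      _ = s * (vtxM g k l * k) := by simp
      _ ≤ p * (vtxM g k l * k) := Nat.mul_le_mul_right _ hs
  set n := P.length + 1 with hn
  have hcard : Fintype.card V = n := by
    have h1 : P.support.toFinset = Finset.univ := by ext w; simp [hPall]
    have h2 := List.toFinset_card_of_nodup hP.support_nodup
    rw [h1, Finset.card_univ] at h2
    rw [h2, SimpleGraph.Walk.length_support]
  have hginj : ∀ i < n, ∀ j < n, P.getVert i = P.getVert j → i = j := by
    intro i hi j hj h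
    exact hP.getVert_injOn (by simp; omega) (by simp; omega) h
  have hgadj : ∀ i, i + 1 < n → G.Adj (P.getVert i) (P.getVert (i + 1)) := by
    intro i hi
    exact P.adj_getVert_succ (by omega)
  have hfin : Set.Finite {j : ℕ | j < n ∧ P.getVert j ∈ X} :=
    (Set.finite_Iio n).subset fun j hj => hj.1
  obtain ⟨s0, hs1, hs2⟩ := window hfin.toFinset (excB g p a k l) (coreT g l + 1) n (by
    rw [← Set.ncard_eq_toFinset_card _ hfin]
    refine le_trans ?_ hX
    refine Set.ncard_le_ncard_of_injOn P.getVert (fun j hj => hj.2) ?_ (Set.toFinite _)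
    rintro i ⟨hi, _⟩ j ⟨hj, _⟩ h
    exact hginj i hi j hj h) (by rw [← hcard]; exact hcon)
  let q : ℕ → V := fun j => P.getVert (s0 + j)
  have hqX : ∀ j < coreT g l + 1, q j ∉ X := by
    intro j hj h
    refine hs2 (s0 + j) (by omega) (by omega) ?_
    rw [Set.Finite.mem_toFinset]
    exact ⟨by omega, h⟩
  have hqinj : ∀ i < coreT g l + 1, ∀ j < coreT g l + 1, q i = q j → i = j := by
    intro i hi j hj h
    have := hginj _ (by omega) _ (by omega) h
    omega
  have hqA : ∀ j < coreT g l + 1, q j ∉ A := fun j hj h => hqX j hj (Or.inl h)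
  have hqV : ∀ j < coreT g l + 1, ∀ i, q j ∉ (Gv i).verts := fun j hj i h =>
    hqX j hj (Or.inr (Set.mem_iUnion.2 ⟨i, h⟩))
  have hq0 : ∀ j < coreT g l + 1, q j ∈ G₀.verts := by
    intro j hj
    rcases (hvert _).1 (hqA j hj) with h | ⟨i, h⟩
    · exact h
    · exact absurd h (hqV j hj i)
  have := model_bound S g hS (G.comap q) (coreT g l + 1) l
    (by
      intro i hi
      have := hgadj (s0 + i) (by omega)
      exact this)
    (by
      intro f r hf hr
      refine hb (q ∘ f) r ⟨?_, ?_⟩ fun _ _ => Set.mem_univ _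
      · intro i hi j hj h
        exact hf.1 i hi j hj (hqinj _ (hr i hi) _ (hr j hj) h)
      · intro i hi j hj
        exact hf.2 i hi j hj)
    (fun j => {x | (x : V) = q j})
    (by
      intro j hj
      refine ⟨⟨⟨q j, hq0 j hj⟩, rfl⟩, ?_⟩
      intro u hu v hv
      have : u = v := Subtype.ext (Eq.trans hu (Eq.symm hv))
      subst this
      exact .refl)
    (by
      intro i hi j hj hij
      rw [Set.disjoint_left]
      intro x h1 h2
      exact hij (hqinj i hi j hj (Eq.trans (Eq.symm h1) h2)))
    (by
      intro i hi j hj h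
      refine ⟨⟨q i, hq0 i hi⟩, rfl, ⟨q j, hq0 j hj⟩, rfl, ?_⟩
      rcases hedge _ _ (hqA i hi) (hqA j hj) h with h | ⟨i', h⟩
      · exact h
      · exact absurd ((Gv i').edge_vert h) (hqV i hi i'))
  omega

end IndP

namespace IndP

theorem coreL_le (l : ℕ) : coreL l ≤ 2 ^ (3 * l + 1) := by
  unfold coreL
  have h1 : l < 2 ^ l := Nat.lt_two_pow_self
  have h2 : (4 : ℕ) ^ l = 2 ^ (2 * l) := by rw [pow_mul]; norm_num
  rw [h2]
  have h3 : l * 2 ^ (2 * l) ≤ 2 ^ l * 2 ^ (2 * l) := Nat.mul_le_mul_right _ h1.le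
  have h4 : 2 ^ l * 2 ^ (2 * l) = 2 ^ (3 * l) := by rw [← pow_add]; congr 1; omega
  have h5 : 1 ≤ 2 ^ (3 * l) := Nat.one_le_two_pow
  rw [pow_succ]
  omega

theorem coreT_le (g l : ℕ) (hl : 1 ≤ l) : coreT g l ≤ 2 ^ ((g + 8) * l ^ 2) := by
  unfold coreT
  have h1 := coreL_le l
  have h2 : g + 1 ≤ 2 ^ g := Nat.lt_two_pow_self
  have h3 : (g + 1) * coreL l ≤ 2 ^ (g + 3 * l + 1) := by
    calc (g + 1) * coreL l ≤ 2 ^ g * 2 ^ (3 * l + 1) := Nat.mul_le_mul h2 h1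
      _ = _ := by rw [← pow_add, add_assoc]
  have h4 : 2 * ((g + 1) * coreL l + 1) + 1 ≤ 2 ^ (g + 3 * l + 4) := by
    have e : 2 ^ (g + 3 * l + 4) = 8 * 2 ^ (g + 3 * l + 1) := by
      rw [show g + 3 * l + 4 = (g + 3 * l + 1) + 3 by ring, pow_add]; ring
    have : 1 ≤ 2 ^ (g + 3 * l + 1) := Nat.one_le_two_pow
    omega
  calc _ ≤ (2 ^ (g + 3 * l + 4)) ^ l := Nat.pow_le_pow_left h4 l
    _ = 2 ^ ((g + 3 * l + 4) * l) := by rw [← pow_mul]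
    _ ≤ _ := by
      apply Nat.pow_le_pow_right (by norm_num)
      have : g + 3 * l + 4 ≤ (g + 8) * l := by nlinarith
      calc _ ≤ (g + 8) * l * l := Nat.mul_le_mul_right _ this
        _ = _ := by ring

theorem num_bound (g p a k l : ℕ) (hl : 1 ≤ l) :
    (excB g p a k l + 1) * (coreT g l + 1)
      ≤ 2 ^ ((a + p * k + k * (g + 11) + (g + 9)) * l ^ 2) := by
  have hL : 1 ≤ l ^ 2 := Nat.one_le_pow _ _ hl
  generalize hLL : l ^ 2 = L at *
  have h1 : coreT g l ≤ 2 ^ ((g + 8) * L) := hLL ▸ coreT_le g l hl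
  have h0 : 1 ≤ 2 ^ ((g + 8) * L) := Nat.one_le_two_pow
  have h2 : coreT g l + 1 ≤ 2 ^ ((g + 9) * L) := by
    calc _ ≤ 2 ^ ((g + 8) * L + 1) := by rw [pow_succ]; omega
      _ ≤ _ := Nat.pow_le_pow_right (by norm_num) (by nlinarith)
  have h3 : 2 * (coreT g l + 1) ≤ 2 ^ ((g + 10) * L) := by
    calc _ ≤ 2 ^ ((g + 9) * L + 1) := by rw [pow_succ]; omega
      _ ≤ _ := Nat.pow_le_pow_right (by norm_num) (by nlinarith)
  have hk1 : k + 1 ≤ 2 ^ k := Nat.lt_two_pow_self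
  have h4 : vtxM g k l ≤ 2 ^ (k * (g + 11) * L) := by
    unfold vtxM
    calc _ ≤ 2 ^ k * (2 ^ ((g + 10) * L)) ^ k := Nat.mul_le_mul hk1 (Nat.pow_le_pow_left h3 k)
      _ = 2 ^ (k + (g + 10) * L * k) := by rw [← pow_mul, ← pow_add]
      _ ≤ _ := Nat.pow_le_pow_right (by norm_num) (by nlinarith [Nat.mul_le_mul_left k hL])
  have h5 : 1 ≤ 2 ^ (k * (g + 11) * L) := Nat.one_le_two_pow
  have h6 : excB g p a k l + 1 ≤ 2 ^ ((a + p * k + k * (g + 11)) * L) := by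
    unfold excB
    have hx : a + p * k + 1 ≤ 2 ^ (a + p * k) := Nat.lt_two_pow_self
    calc _ ≤ (a + p * k + 1) * 2 ^ (k * (g + 11) * L) := by
          generalize 2 ^ (k * (g + 11) * L) = X at *
          have : p * (vtxM g k l * k) ≤ p * (X * k) :=
            Nat.mul_le_mul_left _ (Nat.mul_le_mul_right _ h4)
          nlinarith [Nat.mul_le_mul_left a h5]
      _ ≤ 2 ^ (a + p * k) * 2 ^ (k * (g + 11) * L) := Nat.mul_le_mul_right _ hx
      _ = 2 ^ (a + p * k + k * (g + 11) * L) := by rw [← pow_add]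
      _ ≤ _ := Nat.pow_le_pow_right (by norm_num)
          (by nlinarith [Nat.mul_le_mul_left (a + p * k) hL])
  calc _ ≤ 2 ^ ((a + p * k + k * (g + 11)) * L) * 2 ^ ((g + 9) * L) := Nat.mul_le_mul h6 h2
    _ = _ := by rw [← pow_add]; congr 1; ring

theorem exists_max {V : Type} [Fintype V] (G : SimpleGraph V) (v : V) :
    ∃ l, 1 ≤ l ∧ Nonempty (pathGraph l ↪g G) ∧ BddInd G Set.univ l := by
  classical
  have hb : ∀ m, Nonempty (pathGraph m ↪g G) → m ≤ Fintype.card V := by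
    rintro m ⟨f⟩
    simpa using Fintype.card_le_of_injective f f.injective
  have h1 : Nonempty (pathGraph 1 ↪g G) :=
    ⟨⟨⟨fun _ => v, fun _ _ _ => Subsingleton.elim _ _⟩, by
      intro x y
      have := Subsingleton.elim x y
      subst this
      simp⟩⟩
  have hc := hb 1 h1
  refine ⟨Nat.findGreatest (fun m => Nonempty (pathGraph m ↪g G)) (Fintype.card V),
    Nat.le_findGreatest hc h1, Nat.findGreatest_spec (P := fun m => Nonempty (pathGraph m ↪g G)) hc h1, ?_⟩
  intro f m hf _
  have hm : Nonempty (pathGraph m ↪g G) :=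
    ⟨⟨⟨fun i => f i, fun i j h => Fin.ext (hf.1 i i.2 j j.2 h)⟩, by
      intro i j
      rw [pathGraph_adj]
      exact hf.2 i i.2 j j.2⟩⟩
  exact Nat.le_findGreatest (hb m hm) hm

end IndP


theorem stmt15 (g p a k : ℕ) (hk : 2 ≤ k) :
    ∃ c : ℝ, 0 < c ∧
      ∀ {V : Type} [Fintype V] (G : SimpleGraph V) (n : ℕ),
        AlmostEmbeddable G g p a k → HasHamPath G → Fintype.card V = n →
        HasInducedPathGE G (c * Real.logb 2 n ^ ((1 : ℝ) / k)) := by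
  obtain ⟨C, hC⟩ : ∃ C, C = a + p * k + k * (g + 11) + (g + 9) := ⟨_, rfl⟩
  have hC0 : (0 : ℝ) < C := by
    have : 0 < C := by omega
    exact_mod_cast this
  have hs : 0 < Real.sqrt C := Real.sqrt_pos.2 hC0
  refine ⟨(Real.sqrt C)⁻¹, inv_pos.2 hs, ?_⟩
  intro V _ G n hG hH hn
  obtain ⟨l, hl, hP, hbd⟩ := IndP.exists_max G hH.choose
  refine ⟨l, ?_, hP⟩
  have hlt := (IndP.order_bound hG hH hbd).le.trans (IndP.num_bound g p a k l hl)
  rw [hn, ← hC] at hlt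
  rw [inv_mul_le_iff₀ hs]
  have hk0 : (0 : ℝ) < k := by
    have : 0 < k := by omega
    exact_mod_cast this
  by_cases h2 : n < 2
  · have h0 : Real.logb 2 n = 0 := by
      interval_cases n <;> simp
    rw [h0, Real.zero_rpow (by positivity)]
    positivity
  · have hn2 : (2 : ℝ) ≤ n := by
      have : 2 ≤ n := by omega
      exact_mod_cast this
    have hL1 : 1 ≤ Real.logb 2 n := by
      rw [Real.le_logb_iff_rpow_le (by norm_num) (by linarith)]
      simpa using hn2
    have hLC : Real.logb 2 n ≤ C * (l : ℝ) ^ 2 := by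
      rw [Real.logb_le_iff_le_rpow (by norm_num) (by linarith)]
      have h3 : (n : ℝ) ≤ 2 ^ (C * l ^ 2) := by exact_mod_cast hlt
      have h4 : ((2 : ℝ) ^ ((C : ℝ) * (l : ℝ) ^ 2)) = 2 ^ (C * l ^ 2) := by
        have h5 : ((C : ℝ) * (l : ℝ) ^ 2) = ((C * l ^ 2 : ℕ) : ℝ) := by push_cast; rfl
        rw [h5, Real.rpow_natCast]
      rw [h4]; exact h3
    have hk2 : (2 : ℝ) ≤ k := by exact_mod_cast hk
    calc Real.logb 2 n ^ ((1 : ℝ) / k) ≤ Real.logb 2 n ^ ((1 : ℝ) / 2) :=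
          Real.rpow_le_rpow_of_exponent_le hL1 (one_div_le_one_div_of_le (by norm_num) hk2)
      _ = Real.sqrt (Real.logb 2 n) := (Real.sqrt_eq_rpow _).symm
      _ ≤ Real.sqrt (C * (l : ℝ) ^ 2) := Real.sqrt_le_sqrt hLC
      _ = Real.sqrt C * l := by
          rw [Real.sqrt_mul hC0.le, Real.sqrt_sq (by positivity)]
end

section
/- Let a be a positive integer and let G be a graph that has a Hamiltonian path. If G admits a varied path representation with adhesion less than a whose underlying path has at least ℓ nodes, then G has an induced path of order at least (1/3)·ℓ^(1/(2a)). -/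
open SimpleGraph Real

namespace Stmt17Aux

open Finset in
lemma walk_between {m : ℕ} {a b : Fin m} (p : (pathGraph m).Walk a b) (u : Fin m)
    (h1 : a ≤ u) (h2 : u ≤ b) : u ∈ p.support := by
  induction p with
  | nil =>
    have : u = _ := le_antisymm h2 h1
    simp [this]
  | cons h p ih =>
    rename_i a a' b
    rw [SimpleGraph.Walk.support_cons, List.mem_cons]
    by_cases hu : u = a
    · exact Or.inl hu
    · right
      apply ih _ h2
      rw [pathGraph_adj] at h
      rw [Fin.le_def] at *
      have : (u : ℕ) ≠ a := fun h => hu (Fin.ext h)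
      omega

lemma model_ordConnected {V : Type*} {G : SimpleGraph V} {m : ℕ} (R : TreeRep G (pathGraph m))
    (v : V) : (R.model v).OrdConnected := by
  refine ⟨fun s hs t ht u hu => ?_⟩
  obtain ⟨p⟩ := (R.model_connected v).preconnected ⟨s, hs⟩ ⟨t, ht⟩
  have := walk_between (p.map (SimpleGraph.Embedding.induce (R.model v)).toHom) u hu.1 hu.2
  rw [SimpleGraph.Walk.support_map, List.mem_map] at this
  obtain ⟨w, _, rfl⟩ := this
  exact w.2

lemma seq_between {V : Type*} {G : SimpleGraph V} {m : ℕ} (R : TreeRep G (pathGraph m))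
    (g : ℕ → V) (x y : ℕ) (hxy : x ≤ y) (hadj : ∀ i, x ≤ i → i < y → G.Adj (g i) (g (i + 1)))
    (s t u : Fin m) (hs : s ∈ R.model (g x)) (ht : t ∈ R.model (g y)) (hu : u ∈ Set.uIcc s t) :
    ∃ z, x ≤ z ∧ z ≤ y ∧ u ∈ R.model (g z) := by
  induction y, hxy using Nat.le_induction generalizing t with
  | base =>
    exact ⟨x, le_rfl, le_rfl, (model_ordConnected R (g x)).uIcc_subset hs ht hu⟩
  | succ y hxy ih =>
    obtain ⟨w, hw1, hw2⟩ := R.adj_meet (hadj y hxy (Nat.lt_succ_self y))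
    rcases Set.uIcc_subset_uIcc_union_uIcc (b := w) hu with h | h
    · obtain ⟨z, hz1, hz2, hz3⟩ := ih (fun i h1 h2 => hadj i h1 (by omega)) w hw1 h
      exact ⟨z, hz1, by omega, hz3⟩
    · exact ⟨y + 1, by omega, le_rfl,
        (model_ordConnected R (g (y + 1))).uIcc_subset hw2 ht h⟩

lemma split3 {m : ℕ} (S : Finset (Fin m)) (hS : (S : Set (Fin m)).OrdConnected)
    (T : Set (Fin m)) (hT : T.OrdConnected) (M : ℕ) (hM : 3 * M < S.card) :
    ∃ S' ⊆ S, (S' : Set (Fin m)).OrdConnected ∧ M < S'.card ∧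
      ((∀ t ∈ S', t ∈ T) ∨ (∀ t ∈ S', t ∉ T)) := by
  classical
  by_cases hTe : T = ∅
  · exact ⟨S, subset_rfl, hS, by omega, Or.inr (by simp [hTe])⟩
  obtain ⟨r, hr⟩ := Set.nonempty_iff_ne_empty.mpr hTe
  set A := S.filter (fun t => t ∈ T) with hA
  set B := S.filter (fun t => t ∉ T ∧ t < r) with hB
  set C := S.filter (fun t => t ∉ T ∧ r < t) with hC
  have hcard : S.card ≤ A.card + B.card + C.card := by
    have : S ⊆ (A ∪ B) ∪ C := by
      intro t ht
      simp only [hA, hB, hC, Finset.mem_union, Finset.mem_filter, ht, true_and]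
      by_cases h : t ∈ T
      · simp [h]
      · have : t ≠ r := fun e => h (e ▸ hr)
        rcases lt_or_gt_of_ne this with h' | h' <;> simp [h, h']
    calc S.card ≤ ((A ∪ B) ∪ C).card := Finset.card_le_card this
      _ ≤ (A ∪ B).card + C.card := Finset.card_union_le _ _
      _ ≤ _ := by have := Finset.card_union_le A B; omega
  have : M < A.card ∨ M < B.card ∨ M < C.card := by omega
  rcases this with h | h | h
  · refine ⟨A, Finset.filter_subset _ _, ⟨?_⟩, h, Or.inl ?_⟩
    · intro a ha b hb c hc
      simp only [hA, Finset.coe_filter, Set.mem_ofPred_eq] at ha hb ⊢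
      exact ⟨hS.out ha.1 hb.1 hc, hT.out ha.2 hb.2 hc⟩
    · intro t ht; exact (Finset.mem_filter.mp ht).2
  · refine ⟨B, Finset.filter_subset _ _, ⟨?_⟩, h, Or.inr ?_⟩
    · intro a ha b hb c hc
      simp only [hB, Finset.coe_filter, Set.mem_ofPred_eq] at ha hb ⊢
      exact ⟨hS.out ha.1 hb.1 hc,
        fun hcT => hb.2.1 (hT.out hcT hr ⟨hc.2, hb.2.2.le⟩), lt_of_le_of_lt hc.2 hb.2.2⟩
    · intro t ht; exact (Finset.mem_filter.mp ht).2.1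
  · refine ⟨C, Finset.filter_subset _ _, ⟨?_⟩, h, Or.inr ?_⟩
    · intro a ha b hb c hc
      simp only [hC, Finset.coe_filter, Set.mem_ofPred_eq] at ha hb ⊢
      exact ⟨hS.out ha.1 hb.1 hc,
        fun hcT => ha.2.1 (hT.out hr hcT ⟨ha.2.2.le, hc.1⟩), lt_of_lt_of_le ha.2.2 hc.1⟩
    · intro t ht; exact (Finset.mem_filter.mp ht).2.1

lemma exists_consec {m : ℕ} (S : Finset (Fin m)) (hS : (S : Set (Fin m)).OrdConnected)
    (h : 1 < S.card) : ∃ t ∈ S, ∃ t' ∈ S, (pathGraph m).Adj t t' := by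
  obtain ⟨a, ha, b, hb, hab⟩ := Finset.one_lt_card.mp h
  wlog hlt : a < b generalizing a b
  · exact this b hb a ha hab.symm (lt_of_le_of_ne (not_lt.mp hlt) hab.symm)
  have hlt' : (a : ℕ) < b := hlt
  refine ⟨a, ha, ⟨a + 1, by omega⟩, ?_, ?_⟩
  · exact hS.out ha hb ⟨by rw [Fin.le_def]; simp, by rw [Fin.le_def]; simp; omega⟩
  · rw [pathGraph_adj]; simp

/-- A walk realising the distance gives an induced path. -/
lemma geodesic_embedding {W : Type*} {H : SimpleGraph W} {u v : W} (p : H.Walk u v)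
    (hp : p.length = H.dist u v) : Nonempty (pathGraph (p.length + 1) ↪g H) := by
  have key : ∀ i j, i < j → j ≤ p.length → ∀ q : H.Walk (p.getVert i) (p.getVert j),
      j ≤ i + q.length := by
    intro i j hij hj q
    have h := SimpleGraph.dist_le (((p.take i).append q).append (p.drop j))
    simp only [SimpleGraph.Walk.length_append, SimpleGraph.Walk.take_length,
      SimpleGraph.Walk.drop_length] at h
    have : min i p.length = i := by omega
    omega
  have hinj : ∀ i j, i < j → j ≤ p.length → p.getVert i ≠ p.getVert j := by
    intro i j hij hj e
    have := key i j hij hj (SimpleGraph.Walk.nil.copy rfl e)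
    simp at this
    omega
  have hadj : ∀ i j, i < j → j ≤ p.length → (H.Adj (p.getVert i) (p.getVert j) ↔ i + 1 = j) := by
    intro i j hij hj
    constructor
    · intro h
      have := key i j hij hj h.toWalk
      simp at this
      omega
    · rintro rfl
      exact p.adj_getVert_succ (by omega)
  refine ⟨⟨⟨fun i => p.getVert i, ?_⟩, ?_⟩⟩
  · intro i j e
    rcases lt_trichotomy (i : ℕ) j with h | h | h
    · exact absurd e (hinj _ _ h (by omega))
    · exact Fin.ext h
    · exact absurd e.symm (hinj _ _ h (by omega))
  · intro i j
    change H.Adj (p.getVert i) (p.getVert j) ↔ _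
    rw [pathGraph_adj]
    rcases lt_trichotomy (i : ℕ) j with h | h | h
    · rw [hadj _ _ h (by omega)]; omega
    · have : i = j := Fin.ext h
      subst this
      simp
    · rw [SimpleGraph.adj_comm, hadj _ _ h (by omega)]; omega

/-- indices `x` and `y` are joined along the sequence `f` outside `X`. -/
def Conn {V : Type*} (f : ℕ → V) (X : Set V) (x y : ℕ) : Prop :=
  ∀ u, min x y ≤ u → u ≤ max x y → f u ∉ X

lemma Conn.symm {V : Type*} {f : ℕ → V} {X : Set V} {x y : ℕ} (h : Conn f X x y) :
    Conn f X y x := by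
  intro u h1 h2
  exact h u (by omega) (by omega)

lemma Conn.trans {V : Type*} {f : ℕ → V} {X : Set V} {x y z : ℕ} (h : Conn f X x y)
    (h' : Conn f X y z) : Conn f X x z := by
  intro u h1 h2
  by_cases hu : min x y ≤ u ∧ u ≤ max x y
  · exact h u hu.1 hu.2
  · exact h' u (by omega) (by omega)

lemma reach_seg {V : Type*} {G : SimpleGraph V} (f : ℕ → V) (X : Set V) (x y : ℕ) (hxy : x ≤ y)
    (hadj : ∀ i, x ≤ i → i < y → G.Adj (f i) (f (i + 1)))
    (hX : ∀ i, x ≤ i → i ≤ y → f i ∈ Xᶜ) :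
    (G.induce Xᶜ).Reachable ⟨f x, hX x le_rfl hxy⟩ ⟨f y, hX y hxy le_rfl⟩ := by
  induction y, hxy using Nat.le_induction with
  | base => exact SimpleGraph.Reachable.refl _
  | succ y hxy ih =>
    refine (ih (fun i h1 h2 => hadj i h1 (by omega)) (fun i h1 h2 => hX i h1 (by omega))).trans ?_
    apply SimpleGraph.Adj.reachable
    simpa using hadj y hxy (Nat.lt_succ_self y)

lemma reach_conn {V : Type*} {G : SimpleGraph V} (f : ℕ → V) (n : ℕ)
    (hadj : ∀ i, i + 1 < n → G.Adj (f i) (f (i + 1))) (X : Set V) (x y : ℕ) (hx : x < n)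
    (hy : y < n) (h : Conn f X x y) :
    ∃ (hx' : f x ∈ Xᶜ) (hy' : f y ∈ Xᶜ), (G.induce Xᶜ).Reachable ⟨f x, hx'⟩ ⟨f y, hy'⟩ := by
  refine ⟨h x (by omega) (by omega), h y (by omega) (by omega), ?_⟩
  rcases le_total x y with hxy | hxy
  · exact reach_seg f X x y hxy (fun i _ h2 => hadj i (by omega))
      (fun i h1 h2 => h i (by omega) (by omega))
  · exact (reach_seg f X y x hxy (fun i _ h2 => hadj i (by omega))
      (fun i h1 h2 => h i (by omega) (by omega))).symm

/-- every piece of the sequence outside `X` which meets `S` crosses all of `S`. -/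
def Inv {V : Type*} {G : SimpleGraph V} {m : ℕ} (R : TreeRep G (pathGraph m))
    (f : ℕ → V) (n : ℕ) (X : Set V) (S : Finset (Fin m)) : Prop :=
  ∀ x < n, f x ∉ X → (∃ t ∈ S, t ∈ R.model (f x)) → ∀ t ∈ S, ∃ y < n, Conn f X x y ∧
    t ∈ R.model (f y)

lemma step {V : Type*} {G : SimpleGraph V} {m : ℕ} (R : TreeRep G (pathGraph m))
    (hvar : R.Varied) (f : ℕ → V) (n N : ℕ)
    (hadj : ∀ i, i + 1 < n → G.Adj (f i) (f (i + 1)))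
    (hinj : ∀ i < n, ∀ j < n, f i = f j → i = j) (hsurj : ∀ v, ∃ i < n, f i = v)
    (hN : ∀ k, Nonempty (pathGraph k ↪g G) → k ≤ N)
    (X : Set V) (S : Finset (Fin m)) (hS : (S : Set (Fin m)).OrdConnected)
    (hXS : ∀ v ∈ X, ∀ t ∈ S, t ∈ R.model v) (hInv : Inv R f n X S)
    (M : ℕ) (hM : 9 * N * M < S.card) (h1 : 1 < S.card) :
    ∃ v ∉ X, ∃ S' : Finset (Fin m), (S' : Set (Fin m)).OrdConnected ∧ M < S'.card ∧
      (∀ w ∈ insert v X, ∀ t ∈ S', t ∈ R.model w) ∧ Inv R f n (insert v X) S' := by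
  classical
  -- a vertex outside X
  obtain ⟨t, ht, t', ht', htt⟩ := exists_consec S hS h1
  obtain ⟨v0, hv0, hv0'⟩ := Set.not_subset.mp (hvar htt)
  have hv0X : v0 ∉ X := fun h => hv0' (hXS v0 h t' ht')
  obtain ⟨x, hx, rfl⟩ := hsurj v0
  have hne : S.Nonempty := ⟨t, ht⟩
  obtain ⟨y0, hy0, hc0, hm0⟩ := hInv x hx hv0X ⟨t, ht, hv0⟩ (S.min' hne) (S.min'_mem hne)
  obtain ⟨y1, hy1, hc1, hm1⟩ := hInv x hx hv0X ⟨t, ht, hv0⟩ (S.max' hne) (S.max'_mem hne)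
  obtain ⟨hX0, hX1, hreach⟩ := reach_conn f n hadj X y0 y1 hy0 hy1 (hc0.symm.trans hc1)
  obtain ⟨p, hp⟩ := hreach.exists_walk_length_eq_dist
  obtain ⟨e⟩ := geodesic_embedding p hp
  have hlen : p.length + 1 ≤ N := hN _ ⟨(SimpleGraph.Embedding.induce Xᶜ).comp e⟩
  have hcov : ∀ s ∈ S, ∃ i, i ≤ p.length ∧ s ∈ R.model (p.getVert i : V) := by
    intro s hs
    obtain ⟨z, _, hz, hz'⟩ := seq_between R (fun i => (p.getVert i : V)) 0 p.length (Nat.zero_le _)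
      (fun i _ hi => by simpa using p.adj_getVert_succ hi) (S.min' hne) (S.max' hne) s
      (by simpa using hm0) (by simpa using hm1)
      (by rw [Set.uIcc_of_le (S.min'_le _ (S.max'_mem hne))]
          exact ⟨S.min'_le _ hs, S.le_max' _ hs⟩)
    exact ⟨z, hz, hz'⟩
  choose! g hg1 hg2 using hcov
  obtain ⟨i, hi, hicard⟩ := Finset.exists_lt_card_fiber_of_mul_lt_card_of_maps_to
    (s := S) (t := Finset.range N) (f := g) (n := 9 * M)
    (fun s hs => by rw [Finset.mem_range]; have := hg1 s hs; omega)
    (by rw [Finset.card_range]; calc N * (9 * M) = 9 * N * M := by ring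
          _ < _ := hM)
  set v : V := (p.getVert i : V) with hv
  have hvX : v ∉ X := (p.getVert i).2
  set S1 := S.filter (fun s => s ∈ R.model v) with hS1
  have hS1card : 9 * M < S1.card := by
    refine lt_of_lt_of_le hicard (Finset.card_le_card ?_)
    intro s hs
    rw [Finset.mem_filter] at hs ⊢
    refine ⟨hs.1, ?_⟩
    rw [hv, ← hs.2]
    exact hg2 s hs.1
  have hS1o : (S1 : Set (Fin m)).OrdConnected := by
    refine ⟨?_⟩
    intro a ha b hb c hc
    simp only [hS1, Finset.coe_filter, Set.mem_ofPred_eq] at ha hb ⊢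
    exact ⟨hS.out ha.1 hb.1 hc, (model_ordConnected R v).out ha.2 hb.2 hc⟩
  obtain ⟨z, hz, hzv⟩ := hsurj v
  -- the two pieces next to z
  have hord : ∀ P : ℕ → Prop, (∀ w, P w → w < n) →
      (∀ a b c, P a → P b → a ≤ c → c ≤ b → P c) →
      {t : Fin m | ∃ w, P w ∧ t ∈ R.model (f w)}.OrdConnected := by
    intro P hPn hP
    refine ⟨?_⟩
    rintro s ⟨w, hw, hsw⟩ t ⟨w', hw', htw⟩ u hu
    rcases le_total w w' with hww | hww
    · obtain ⟨y, hy1, hy2, hy3⟩ := seq_between R f w w' hww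
        (fun i _ hi => hadj i (by have := hPn _ hw'; omega)) s t u hsw htw
        (Set.Icc_subset_uIcc hu)
      exact ⟨y, hP _ _ _ hw hw' hy1 hy2, hy3⟩
    · obtain ⟨y, hy1, hy2, hy3⟩ := seq_between R f w' w hww
        (fun i _ hi => hadj i (by have := hPn _ hw; omega)) t s u htw hsw
        (Set.Icc_subset_uIcc' hu)
      exact ⟨y, hP _ _ _ hw' hw hy1 hy2, hy3⟩
  obtain ⟨S2, hS21, hS2o, hS2card, hS2L⟩ := split3 S1 hS1o _
    (hord (fun w => w < z ∧ ∀ u, w ≤ u → u < z → f u ∉ X) (fun w h => by omega)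
      (fun a b c ha hb hac hcb => ⟨by omega, fun u h1 h2 => ha.2 u (by omega) h2⟩))
    (3 * M) (by omega)
  obtain ⟨S3, hS32, hS3o, hS3card, hS3R⟩ := split3 S2 hS2o _
    (hord (fun w => w < n ∧ z < w ∧ ∀ u, z < u → u ≤ w → f u ∉ X) (fun w h => h.1)
      (fun a b c ha hb hac hcb => ⟨by omega, by omega, fun u h1 h2 => hb.2.2 u h1 (by omega)⟩))
    M (by omega)
  have hS3L : _ ∨ _ := hS2L.imp (fun h t ht => h t (hS32 ht)) (fun h t ht => h t (hS32 ht))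
    (c := ∀ t ∈ S3, _) (d := ∀ t ∈ S3, _)
  have hS3S : S3 ⊆ S := fun t ht => (Finset.mem_filter.mp (hS21 (hS32 ht))).1
  refine ⟨v, hvX, S3, hS3o, hS3card, ?_, ?_⟩
  · intro w hw t ht
    rcases hw with rfl | hw
    · exact (Finset.mem_filter.mp (hS21 (hS32 ht))).2
    · exact hXS w hw t (hS3S ht)
  · intro x hx hxX ⟨t0, ht0, hxt0⟩ t ht
    rw [Set.mem_insert_iff, not_or] at hxX
    obtain ⟨y, hy, hxy, hyt⟩ := hInv x hx hxX.2 ⟨t0, hS3S ht0, hxt0⟩ t (hS3S ht)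
    have hxz : x ≠ z := fun h => hxX.1 (h ▸ hzv)
    have hcc : ∀ w < n, Conn f X x w → ¬ (min x w ≤ z ∧ z ≤ max x w) →
        Conn f (insert v X) x w := by
      intro w hw hc hzw u h1 h2
      rw [Set.mem_insert_iff, not_or]
      refine ⟨fun e => hzw ?_, hc u h1 h2⟩
      have : u = z := hinj u (by omega) z hz (e.trans hzv.symm)
      subst this
      exact ⟨h1, h2⟩
    by_cases hzxy : min x y ≤ z ∧ z ≤ max x y
    · rcases lt_or_gt_of_ne hxz with hlt | hlt
      · have hxL : x < z ∧ ∀ u, x ≤ u → u < z → f u ∉ X :=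
          ⟨hlt, fun u h1 h2 => hxy u (by omega) (by omega)⟩
        rcases hS3L with h | h
        · obtain ⟨w, hw, hwt⟩ := h t ht
          have hwz : w < z := hw.1
          refine ⟨w, by omega, hcc w (by omega) ?_ (by omega), hwt⟩
          intro u h1 h2
          rcases le_or_gt x u with h3 | h3
          · exact hxL.2 u h3 (by omega)
          · exact hw.2 u (by omega) (by omega)
        · exact absurd ⟨x, hxL, hxt0⟩ (h t0 ht0)
      · have hxR : x < n ∧ z < x ∧ ∀ u, z < u → u ≤ x → f u ∉ X :=
          ⟨hx, hlt, fun u h1 h2 => hxy u (by omega) (by omega)⟩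
        rcases hS3R with h | h
        · obtain ⟨w, hw, hwt⟩ := h t ht
          have hwz : z < w := hw.2.1
          refine ⟨w, hw.1, hcc w hw.1 ?_ (by omega), hwt⟩
          intro u h1 h2
          rcases le_or_gt u x with h3 | h3
          · exact hxR.2.2 u (by omega) h3
          · exact hw.2.2 u (by omega) (by omega)
        · exact absurd ⟨x, hxR, hxt0⟩ (h t0 ht0)
    · exact ⟨y, hy, hcc y hy hxy hzxy, hyt⟩

lemma iterate {V : Type*} [Finite V] {G : SimpleGraph V} {m : ℕ} (R : TreeRep G (pathGraph m))
    (hvar : R.Varied) (a : ℕ) (hadh : R.AdhesionLT a) (f : ℕ → V) (n N : ℕ) (hN1 : 1 ≤ N)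
    (hadj : ∀ i, i + 1 < n → G.Adj (f i) (f (i + 1)))
    (hinj : ∀ i < n, ∀ j < n, f i = f j → i = j) (hsurj : ∀ v, ∃ i < n, f i = v)
    (hN : ∀ k, Nonempty (pathGraph k ↪g G) → k ≤ N) (j : ℕ) :
    ∀ (X : Set V) (S : Finset (Fin m)), (S : Set (Fin m)).OrdConnected →
    (∀ v ∈ X, ∀ t ∈ S, t ∈ R.model v) → Inv R f n X S →
    (9 * N) ^ j < S.card → a ≤ X.ncard + j → False := by
  induction j with
  | zero =>
    intro X S hS hXS _ hcard hX
    obtain ⟨t, ht, t', ht', htt⟩ := exists_consec S hS (by simpa using hcard)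
    have h1 := hadh htt
    have h2 : X.ncard ≤ (R.bag t ∩ R.bag t').ncard :=
      Set.ncard_le_ncard (fun v hv => ⟨hXS v hv t ht, hXS v hv t' ht'⟩) (Set.toFinite _)
    omega
  | succ j ih =>
    intro X S hS hXS hInv hcard hX
    have h1 : 1 ≤ (9 * N) ^ (j + 1) := Nat.one_le_pow _ _ (by omega)
    obtain ⟨v, hv, S', hS', hc', hXS', hInv'⟩ := step R hvar f n N hadj hinj hsurj hN X S hS hXS
      hInv ((9 * N) ^ j) (by rw [pow_succ] at hcard; rwa [mul_comm]) (by omega)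
    refine ih (insert v X) S' hS' hXS' hInv' hc' ?_
    rw [Set.ncard_insert_of_notMem hv (Set.toFinite _)]
    omega

lemma main {V : Type*} [Finite V] {G : SimpleGraph V} {m : ℕ} (R : TreeRep G (pathGraph m))
    (hham : HasHamPath G)
    (hvar : R.Varied) (a : ℕ) (hadh : R.AdhesionLT a) (N : ℕ) (hN1 : 1 ≤ N)
    (hN : ∀ k, Nonempty (pathGraph k ↪g G) → k ≤ N) : m ≤ (9 * N) ^ a := by
  by_contra hlt
  push Not at hlt
  obtain ⟨u, v, p, hp, hall⟩ := hham
  have hone : 1 ≤ (9 * N) ^ a := Nat.one_le_pow _ _ (by omega)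
  have hadj : ∀ i, i + 1 < p.length + 1 → G.Adj (p.getVert i) (p.getVert (i + 1)) :=
    fun i hi => p.adj_getVert_succ (by omega)
  have hsurj : ∀ v, ∃ i < p.length + 1, p.getVert i = v := by
    intro w
    obtain ⟨i, hi, hi'⟩ := (SimpleGraph.Walk.mem_support_iff_exists_getVert).mp (hall w)
    exact ⟨i, by omega, by assumption⟩
  refine iterate R hvar a hadh p.getVert (p.length + 1) N hN1 hadj ?_ hsurj hN a ∅
    Finset.univ ?_ ?_ ?_ (by simpa using hlt) (by simp)
  · intro i hi j hj e
    exact hp.getVert_injOn (by simp; omega) (by simp; omega) e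
  · simpa using Set.ordConnected_univ
  · simp
  · intro x hx _ _ t _
    -- the bag at t is nonempty
    have : ∃ t' : Fin m, (pathGraph m).Adj t t' := by
      by_cases h : (t : ℕ) + 1 < m
      · exact ⟨⟨t + 1, h⟩, by rw [pathGraph_adj]; simp⟩
      · exact ⟨⟨t - 1, by omega⟩, by rw [pathGraph_adj]; simp; omega⟩
    obtain ⟨t', htt⟩ := this
    obtain ⟨w, hw, _⟩ := Set.not_subset.mp (hvar htt)
    obtain ⟨y, hy, rfl⟩ := hsurj w
    exact ⟨y, hy, fun u _ _ => by simp, hw⟩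

end Stmt17Aux

theorem stmt17 (a : ℕ) (ha : 0 < a) {V : Type} [Fintype V] (G : SimpleGraph V)
    (hham : HasHamPath G) (ℓ m : ℕ) (R : TreeRep G (pathGraph m)) (hm : ℓ ≤ m)
    (hvaried : R.Varied) (hadh : R.AdhesionLT a) :
    HasInducedPathGE G ((1 / 3 : ℝ) * (ℓ : ℝ) ^ ((1 : ℝ) / (2 * a))) := by
  classical
  by_contra hcon
  set r : ℝ := (1 / 3 : ℝ) * (ℓ : ℝ) ^ ((1 : ℝ) / (2 * a)) with hr
  have hlt : ∀ k, Nonempty (pathGraph k ↪g G) → (k : ℝ) < r := by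
    intro k hk
    by_contra h
    exact hcon ⟨k, not_lt.mp h, hk⟩
  obtain ⟨u, _⟩ := id hham
  have h1 : Nonempty (pathGraph 1 ↪g G) :=
    ⟨⟨⟨fun _ => u, fun i j _ => Subsingleton.elim i j⟩, by
      intro i j
      have : i = j := Subsingleton.elim i j
      subst this
      simp⟩⟩
  have hr1 : (1 : ℝ) < r := by simpa using hlt 1 h1
  obtain ⟨N, hN⟩ : ∃ N, ⌈r⌉₊ = N + 1 :=
    Nat.exists_eq_succ_of_ne_zero (by rw [Ne, Nat.ceil_eq_zero]; linarith)
  have hle : ∀ k, Nonempty (pathGraph k ↪g G) → k ≤ N := by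
    intro k hk
    have := Nat.lt_ceil.mpr (hlt k hk)
    omega
  have hNr : (N : ℝ) < r := Nat.lt_ceil.mp (by omega)
  have hN1 := hle 1 h1
  have hmain := Stmt17Aux.main R hham hvaried a hadh N hN1 hle
  have hpow : ((3 : ℝ) * N) ^ (2 * a) < ℓ := by
    have h3 : (3 : ℝ) * N < (ℓ : ℝ) ^ ((1 : ℝ) / (2 * a)) := by rw [hr] at hNr; linarith
    have h4 := pow_lt_pow_left₀ h3 (by positivity) (n := 2 * a) (by omega)
    rw [← Real.rpow_natCast ((ℓ : ℝ) ^ ((1 : ℝ) / (2 * a))), ← Real.rpow_mul (by positivity)] at h4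
    have h5 : (1 : ℝ) / (2 * a) * ((2 * a : ℕ) : ℝ) = 1 := by
      push_cast
      have : (a : ℝ) ≠ 0 := by positivity
      field_simp
    rwa [h5, Real.rpow_one] at h4
  have hpow' : (3 * N) ^ (2 * a) < ℓ := by exact_mod_cast hpow
  have h6 : (9 * N) ^ a ≤ (3 * N) ^ (2 * a) := by
    rw [pow_mul]
    exact Nat.pow_le_pow_left (by nlinarith) a
  omega
end
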